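/- arXiv:1805.04353 — 11 statements merged into one kernel-verified Lean document; each statement's English description precedes it below -/
import Mathlib

section
/- Let p be a prime number and let v₁,…,v_k ∈ ℤ⁴ with 1 ≤ k ≤ 3 be a p-orthonormal system, i.e. ⟨vᵢ|vᵢ⟩ = p for all 1 ≤ i ≤ k and ⟨vᵢ|vⱼ⟩ = 0 for all 1 ≤ i < j ≤ k. Then there exists v = (x₁,x₂,x₃,x₄) ∈ ℤ⁴ such that ⟨vᵢ|v⟩ = 0 for all 1 ≤ i ≤ k and x₁² + x₂² + x₃² + x₄² = p. -/
/-!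
Identify `ℤ⁴` with the quaternions with integer coordinates, so that `⟨a|b⟩` is the real part of
`a * star b`. If a prime `p` divides all the products `⟨vᵢ|vⱼ⟩`, including the norms, then the `vᵢ`
have a common left divisor or a common right divisor `π` of norm `p`. Indeed, for odd `p` the
quaternions modulo `p` form a prime ring, which forces `p ∣ star vᵢ * vⱼ` or `p ∣ vⱼ * star vᵢ`,
uniformly in `j`; then Lagrange's descent inside the left ideal generated by `vᵢ` and `p` (or its
mirror image) yields `π`. For `p = 2` a divisor of the form `1 + i`, `1 + j` or `1 + k` is read off
from the parities of the coordinates.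

Multiplication by `π` multiplies all products by `p`, so dividing by `π` and inducting on the prime
factors of the common norm `n` reduces the problem to `n = 1`. There each `vᵢ` is, up to sign, a
standard basis vector, and three of them miss one of the four axes.
-/

open Quaternion

section CommRing

variable {R : Type*} [CommRing R]

/-- The quaternions `1, i, j, k`, indexed by their position in `equivTuple`. -/
def quaternionUnit (R : Type*) [CommRing R] (t : Fin 4) : ℍ[R] :=
  (equivTuple R).symm (Pi.single t 1)

@[simp] lemma re_quaternionUnit (t : Fin 4) :
    (quaternionUnit R t).re = (Pi.single t 1 : Fin 4 → R) 0 := rfl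

@[simp] lemma imI_quaternionUnit (t : Fin 4) :
    (quaternionUnit R t).imI = (Pi.single t 1 : Fin 4 → R) 1 := rfl

@[simp] lemma imJ_quaternionUnit (t : Fin 4) :
    (quaternionUnit R t).imJ = (Pi.single t 1 : Fin 4 → R) 2 := rfl

@[simp] lemma imK_quaternionUnit (t : Fin 4) :
    (quaternionUnit R t).imK = (Pi.single t 1 : Fin 4 → R) 3 := rfl

lemma re_mul_star_eq_sum (a b : ℍ[R]) :
    (a * star b).re = ∑ t, equivTuple R a t * equivTuple R b t := by
  simp [Fin.sum_univ_four]

lemma re_mul_star_quaternionUnit (a : ℍ[R]) (t : Fin 4) :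
    (a * star (quaternionUnit R t)).re = equivTuple R a t := by
  fin_cases t <;> simp

lemma normSq_quaternionUnit (t : Fin 4) : normSq (quaternionUnit R t) = 1 := by
  fin_cases t <;> simp [normSq_def']

lemma sum_star_quaternionUnit_mul_mul (a : ℍ[R]) :
    ∑ t, star (quaternionUnit R t) * a * quaternionUnit R t = ((4 * a.re : R) : ℍ[R]) := by
  ext <;> simp [Fin.sum_univ_four]; ring

lemma coe_dvd_quaternion_iff {r : R} {a : ℍ[R]} :
    (r : ℍ[R]) ∣ a ↔ ∀ t, r ∣ equivTuple R a t := by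
  constructor
  · rintro ⟨b, rfl⟩ t
    fin_cases t <;> simp
  · intro h
    choose b hb using h
    refine ⟨(equivTuple R).symm b, (equivTuple R).injective ?_⟩
    ext t
    rw [hb, coe_mul_eq_smul]
    fin_cases t <;> rfl

lemma coe_dvd_quaternion_mul_left {r : R} {a : ℍ[R]} (b : ℍ[R]) (h : (r : ℍ[R]) ∣ a) :
    (r : ℍ[R]) ∣ b * a := by
  obtain ⟨c, rfl⟩ := h
  exact ⟨b * c, by rw [← mul_assoc, ← coe_commutes, mul_assoc]⟩

lemma coe_dvd_quaternion_star_iff {r : R} {a : ℍ[R]} :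
    (r : ℍ[R]) ∣ star a ↔ (r : ℍ[R]) ∣ a := by
  simp [coe_dvd_quaternion_iff, Fin.forall_fin_succ]

lemma dvd_or_coe_dvd_of_coe_dvd_coe_mul {p : R} (hp : Prime p) {r : R} {a : ℍ[R]}
    (h : (p : ℍ[R]) ∣ r * a) : p ∣ r ∨ (p : ℍ[R]) ∣ a := by
  rw [or_iff_not_imp_left]
  intro hr
  simpa [coe_dvd_quaternion_iff, Fin.forall_fin_succ, hp.dvd_mul, hr] using h

lemma quaternion_mul_mul_self (a b : ℍ[R]) :
    a * b * a = ((2 * (a * b).re : R) : ℍ[R]) * a - ((normSq a : R) : ℍ[R]) * star b := by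
  ext <;> simp [-coe_pow, normSq_def'] <;> ring

lemma coe_dvd_or_coe_dvd_of_forall_coe_dvd_mul_mul {p : R} (hp : Prime p) (hp2 : ¬ p ∣ 2)
    {a b : ℍ[R]} (h : ∀ x, (p : ℍ[R]) ∣ a * x * b) : (p : ℍ[R]) ∣ a ∨ (p : ℍ[R]) ∣ b := by
  rw [or_iff_not_imp_right]
  intro hb
  have hp4 : ¬ p ∣ 4 := by
    rw [show (4 : R) = 2 * 2 by norm_num, hp.dvd_mul]
    tauto
  have hre (y : ℍ[R]) : p ∣ (a * y).re := by
    have h4 : (p : ℍ[R]) ∣ ((4 * (a * y).re : R) : ℍ[R]) * b := by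
      rw [← sum_star_quaternionUnit_mul_mul, Finset.sum_mul]
      refine Finset.dvd_sum fun t _ ↦ ?_
      simpa only [mul_assoc] using
        coe_dvd_quaternion_mul_left (star (quaternionUnit R t)) (h (y * quaternionUnit R t))
    have h4re := (dvd_or_coe_dvd_of_coe_dvd_coe_mul hp h4).resolve_right hb
    exact (hp.dvd_mul.mp h4re).resolve_left hp4
  exact coe_dvd_quaternion_iff.mpr fun t ↦ re_mul_star_quaternionUnit a t ▸ hre _

lemma coe_dvd_star_mul_or_coe_dvd_mul_star {p : R} (hp : Prime p) (hp2 : ¬ p ∣ 2) {a b : ℍ[R]}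
    (ha : p ∣ normSq a) (hb : p ∣ normSq b) (hab : p ∣ (b * star a).re) :
    (p : ℍ[R]) ∣ star a * b ∨ (p : ℍ[R]) ∣ b * star a := by
  refine (coe_dvd_or_coe_dvd_of_forall_coe_dvd_mul_mul hp hp2 fun x ↦ ?_).symm
  have hcoe {r : R} (hr : p ∣ r) (c : ℍ[R]) : (p : ℍ[R]) ∣ r * c :=
    ((algebraMap R ℍ[R]).map_dvd hr).mul_right c
  have hbab : (p : ℍ[R]) ∣ b * star a * b := by
    rw [quaternion_mul_mul_self]
    exact (hcoe (hab.mul_left 2) _).sub (hcoe hb _)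
  have hexpand : b * star a * x * (star a * b) =
      ((2 * (star a * x).re : R) : ℍ[R]) * (b * star a * b) -
        ((normSq a : R) : ℍ[R]) * (b * star x * b) := by
    calc b * star a * x * (star a * b) = b * (star a * x * star a) * b := by simp only [mul_assoc]
      _ = _ := by
        rw [quaternion_mul_mul_self (star a), normSq_star, mul_sub, sub_mul, ← mul_assoc b,
          ← mul_assoc b, ← coe_commutes, ← coe_commutes]
        simp only [mul_assoc]
  rw [hexpand]
  exact (coe_dvd_quaternion_mul_left _ hbab).sub (hcoe ha _)

lemma forall_coe_dvd_star_mul_or_forall_coe_dvd_mul_star {p : R} (hp : Prime p) (hp2 : ¬ p ∣ 2)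
    {ι : Type*} {a : ℍ[R]} {v : ι → ℍ[R]} (ha : p ∣ normSq a) (hva : ∀ i, p ∣ (v i * star a).re)
    (hv : ∀ i j, p ∣ (v i * star (v j)).re) :
    (∀ i, (p : ℍ[R]) ∣ star a * v i) ∨ ∀ i, (p : ℍ[R]) ∣ v i * star a := by
  have hor {b : ℍ[R]} := coe_dvd_star_mul_or_coe_dvd_mul_star (b := b) hp hp2 ha
  -- As a group is never the union of two proper subgroups, a counterexample `i` to the first
  -- alternative and `j` to the second make `v i + v j` violate both.
  by_contra! ⟨⟨i, hi⟩, j, hj⟩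
  have hi' := (hor (hv i i) (hva i)).resolve_left hi
  have hj' := (hor (hv j j) (hva j)).resolve_right hj
  have hsum : p ∣ normSq (v i + v j) := by
    rw [normSq_add]
    exact ((hv i i).add (hv j j)).add ((hv i j).mul_left 2)
  rcases hor hsum (by simpa only [add_mul, re_add] using (hva i).add (hva j)) with h | h
  · rw [mul_add, dvd_add_left hj'] at h
    exact hi h
  · rw [add_mul, dvd_add_right hi'] at h
    exact hj h

lemma re_mul_mul_star_mul (a b c : ℍ[R]) :
    (a * b * star (a * c)).re = normSq a * (b * star c).re := by
  simp only [normSq_def', star_mul, re_mul, imI_mul, imJ_mul, imK_mul, re_star, imI_star, imJ_star,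
    imK_star]
  ring

lemma re_mul_mul_star_mul_right (a b c : ℍ[R]) :
    (b * a * star (c * a)).re = normSq a * (b * star c).re := by
  simp only [normSq_def', star_mul, re_mul, imI_mul, imJ_mul, imK_mul, re_star, imI_star, imJ_star,
    imK_star]
  ring

lemma normSq_one_add_quaternionUnit {t : Fin 4} (ht : t ≠ 0) :
    normSq (1 + quaternionUnit R t) = 2 := by
  fin_cases t <;> simp [normSq_def', one_add_one_eq_two] at ht ⊢

lemma normSq_sub_natCast_mul (a q : ℍ[R]) (m : ℕ) :
    normSq (a - (m : ℍ[R]) * q) = normSq a + m * (m * normSq q - 2 * (a * star q).re) := by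
  simp only [normSq_def', re_sub, imI_sub, imJ_sub, imK_sub, re_mul, imI_mul, imJ_mul, imK_mul,
    re_star, imI_star, imJ_star, imK_star, re_natCast, imI_natCast, imJ_natCast, imK_natCast]
  ring

end CommRing

lemma dvd_of_coe_normSq_dvd_star_mul {R : Type*} [CommRing R] [LinearOrder R]
    [IsStrictOrderedRing R] {a b : ℍ[R]} (ha : a ≠ 0)
    (h : ((normSq a : R) : ℍ[R]) ∣ star a * b) : a ∣ b := by
  obtain ⟨c, hc⟩ := h
  refine ⟨c, mul_left_cancel₀ (star_ne_zero.mpr ha) ?_⟩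
  rw [hc, ← mul_assoc, Quaternion.star_mul_self a]

lemma one_add_quaternionUnit_dvd {t : Fin 4} (ht : t ≠ 0) {a : ℍ[ℤ]} (ha : Even (normSq a))
    (hat : Even (equivTuple ℤ a 0 + equivTuple ℤ a t)) :
    1 + quaternionUnit ℤ t ∣ a := by
  have hnorm := normSq_one_add_quaternionUnit (R := ℤ) ht
  refine dvd_of_coe_normSq_dvd_star_mul (fun h ↦ by simp [h] at hnorm) ?_
  rw [hnorm, coe_dvd_quaternion_iff]
  -- The coordinates of `star (1 + quaternionUnit ℤ t) * a` are sums and differences of two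
  -- coordinates of `a`, paired as `{0, t}` and its complement.
  intro s
  rw [← even_iff_two_dvd]
  rw [normSq_def'] at ha
  fin_cases t <;> fin_cases s <;> simp_all [parity_simps] <;> tauto

lemma exists_ne_zero_forall_even_add {a : ℍ[ℤ]} (ha : Even (normSq a))
    (hpar : ∃ t, ¬ Even (equivTuple ℤ a 0 + equivTuple ℤ a t)) :
    ∃ t ≠ 0, ∀ b : ℍ[ℤ], Even (normSq b) → Even (b * star a).re →
      Even (equivTuple ℤ b 0 + equivTuple ℤ b t) := by
  simp only [normSq_def', re_mul, re_star, imI_star, imJ_star, imK_star, parity_simps,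
    Fin.exists_fin_succ, equivTuple_apply, Matrix.cons_val_zero, Matrix.cons_val_succ,
    IsEmpty.exists_iff, Fin.succ_ne_zero, ne_eq, two_ne_zero, not_false_eq_true, and_true]
    at ha hpar ⊢
  -- Exactly two coordinates of `a` are odd; `t` is the index whose coordinate has the parity of the
  -- coordinate at `0`.
  grind

lemma exists_normSq_eq_two_forall_dvd {ι : Type*} {v : ι → ℍ[ℤ]}
    (hv : ∀ i j, Even (v i * star (v j)).re) : ∃ π : ℍ[ℤ], normSq π = 2 ∧ ∀ i, π ∣ v i := by
  obtain ⟨t, ht, hvt⟩ : ∃ t ≠ 0, ∀ i,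
      Even (equivTuple ℤ (v i) 0 + equivTuple ℤ (v i) t) := by
    by_cases! hpar : ∃ i t, ¬ Even (equivTuple ℤ (v i) 0 + equivTuple ℤ (v i) t)
    · obtain ⟨i, hi⟩ := hpar
      obtain ⟨t, ht, htb⟩ := exists_ne_zero_forall_even_add (hv i i) hi
      exact ⟨t, ht, fun j ↦ htb _ (hv j j) (hv j i)⟩
    · exact ⟨1, one_ne_zero, fun i ↦ hpar i 1⟩
  exact ⟨1 + quaternionUnit ℤ t, normSq_one_add_quaternionUnit ht,
    fun i ↦ one_add_quaternionUnit_dvd ht (hv i i) (hvt i)⟩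

lemma exists_two_mul_abs_sub_mul_lt {m : ℕ} (hm : Odd m) (x : ℤ) :
    ∃ q : ℤ, 2 * |x - m * q| < m := by
  obtain ⟨q, hq⟩ := Int.dvd_self_sub_bmod (x := x) (m := m)
  have hlt := Int.bmod_lt (x := x) hm.pos
  have hle := Int.le_bmod (x := x) hm.pos
  refine ⟨q, ?_⟩
  rw [← hq]
  obtain ⟨k, rfl⟩ := hm
  grind

lemma exists_normSq_sub_mul_eq {m : ℕ} (hm : Odd m) {a : ℍ[ℤ]} (ha : (m : ℤ) ∣ normSq a) :
    ∃ (q : ℍ[ℤ]) (r : ℕ), r < m ∧ normSq (a - (m : ℍ[ℤ]) * q) = r * m := by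
  have hm0 : (0 : ℤ) < m := by exact_mod_cast hm.pos
  obtain ⟨q, hq⟩ : ∃ q : ℍ[ℤ], ∀ t,
      2 * |equivTuple ℤ a t - m * equivTuple ℤ q t| < m := by
    choose f hf using fun t ↦ exists_two_mul_abs_sub_mul_lt hm (equivTuple ℤ a t)
    exact ⟨(equivTuple ℤ).symm f, by simpa only [Equiv.apply_symm_apply] using hf⟩
  have hlt : normSq (a - (m : ℍ[ℤ]) * q) < m * m := by
    have hsq (t : Fin 4) :
        (2 * (equivTuple ℤ a t - m * equivTuple ℤ q t)) ^ 2 < (m : ℤ) ^ 2 := by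
      rw [sq_lt_sq, abs_mul, abs_two, abs_of_pos hm0]
      exact hq t
    have hnormSq : normSq (a - (m : ℍ[ℤ]) * q) =
        ∑ t, (equivTuple ℤ a t - m * equivTuple ℤ q t) ^ 2 := by
      simp [normSq_def', Fin.sum_univ_four]
    rw [hnormSq, Fin.sum_univ_four]
    linarith [hsq 0, hsq 1, hsq 2, hsq 3]
  obtain ⟨s, hs⟩ : (m : ℤ) ∣ normSq (a - (m : ℍ[ℤ]) * q) := by
    rw [normSq_sub_natCast_mul]
    exact ha.add (dvd_mul_right _ _)
  have hs0 : 0 ≤ s := nonneg_of_mul_nonneg_right (hs ▸ normSq_nonneg) hm0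
  lift s to ℕ using hs0
  have hsm : (s : ℤ) < m := lt_of_mul_lt_mul_left (hs ▸ hlt) hm0.le
  exact ⟨q, s, by exact_mod_cast hsm, by rw [hs, mul_comm]⟩

lemma mem_of_two_mul_mem {A : Type*} [Ring A] {n : ℕ} (hn : Odd n) {I : Ideal A}
    (hnI : (n : A) ∈ I) {u : A} (hu : 2 * u ∈ I) : u ∈ I := by
  obtain ⟨k, rfl⟩ := hn
  have hdecomp : u = u * ((2 * k + 1 : ℕ) : A) - k * (2 * u) := by
    rw [← Nat.cast_comm]
    push_cast
    noncomm_ring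
  rw [hdecomp]
  exact I.sub_mem (I.mul_mem_left _ hnI) (I.mul_mem_left _ hu)

lemma exists_mem_normSq_eq_half {n r : ℕ} (hn : Odd n) {I : Ideal ℍ[ℤ]} (hnI : (n : ℍ[ℤ]) ∈ I)
    (hr : Even r) {x : ℍ[ℤ]} (hxI : x ∈ I) (hx : normSq x = r * n) :
    ∃ u ∈ I, normSq u = (r / 2 : ℕ) * n := by
  obtain ⟨s, rfl⟩ := even_iff_exists_two_mul.mp hr
  obtain ⟨π, hπ, hπx⟩ := exists_normSq_eq_two_forall_dvd (v := fun _ : Unit ↦ x) fun _ _ ↦ by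
    rw [Quaternion.self_mul_star, re_coe, hx]
    exact_mod_cast hr.mul_right n
  obtain ⟨u, rfl⟩ := hπx ()
  refine ⟨u, mem_of_two_mul_mem hn hnI ?_, ?_⟩
  · have h2u : star π * (π * u) = 2 * u := by
      rw [← mul_assoc, Quaternion.star_mul_self, hπ]
      rfl
    exact h2u ▸ I.mul_mem_left _ hxI
  · rw [map_mul, hπ] at hx
    push_cast at hx
    rw [Nat.mul_div_cancel_left _ two_pos]
    linarith

lemma exists_mem_normSq_eq_mul_lt_of_odd {p r : ℕ} (hp : p.Prime) {I : Ideal ℍ[ℤ]}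
    (hpI : (p : ℍ[ℤ]) ∈ I) (hr : Odd r) (hr1 : 1 < r) (hrp : r < p) {x : ℍ[ℤ]} (hxI : x ∈ I)
    (hx : normSq x = r * p) : ∃ z ∈ I, ∃ s : ℕ, 0 < s ∧ s < r ∧ normSq z = s * p := by
  obtain ⟨q, s, hsr, hs⟩ := exists_normSq_sub_mul_eq hr (hx ▸ dvd_mul_right _ _)
  have hr0 : (r : ℤ) ≠ 0 := by exact_mod_cast hr.pos.ne'
  have hprod : star (x - (r : ℍ[ℤ]) * q) * x = (r : ℍ[ℤ]) * (p - star q * x) := by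
    have hxx : star x * x = (r : ℍ[ℤ]) * p := by
      rw [Quaternion.star_mul_self, hx]
      push_cast
      rfl
    rw [star_sub, star_mul, star_natCast, sub_mul, hxx, ← Nat.cast_comm r (star q), mul_sub,
      mul_assoc]
  refine ⟨p - star q * x, I.sub_mem hpI (I.mul_mem_left _ hxI), s, ?_, hsr, ?_⟩
  · refine Nat.pos_of_ne_zero fun h0 ↦ ?_
    have hxq : x = (r : ℍ[ℤ]) * q := by simpa [h0, sub_eq_zero] using hs
    have hrp' : (r : ℤ) ∣ p := ⟨normSq q, mul_left_cancel₀ hr0 <| by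
      rw [← hx, hxq, map_mul, normSq_natCast]; ring⟩
    rcases (Nat.dvd_prime hp).mp (Int.natCast_dvd_natCast.mp hrp') with h | h <;> omega
  · have hnorm := congr_arg normSq hprod
    rw [map_mul, map_mul, normSq_star, hs, hx, normSq_natCast] at hnorm
    refine mul_left_cancel₀ (pow_ne_zero 2 hr0) ?_
    linear_combination -hnorm

lemma exists_mem_normSq_eq_of_mem {p r : ℕ} (hp : p.Prime) (hp2 : p ≠ 2) {I : Ideal ℍ[ℤ]}
    (hpI : (p : ℍ[ℤ]) ∈ I) (hr0 : 0 < r) (hrp : r < p) {x : ℍ[ℤ]} (hxI : x ∈ I)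
    (hx : normSq x = r * p) : ∃ π ∈ I, normSq π = p := by
  induction r using Nat.strong_induction_on generalizing x with
  | _ r ih =>
  obtain rfl | hr1 := (Nat.one_le_iff_ne_zero.mpr hr0.ne').eq_or_lt
  · exact ⟨x, hxI, by simpa using hx⟩
  rcases r.even_or_odd with hr | hr
  · obtain ⟨u, huI, hu⟩ := exists_mem_normSq_eq_half (hp.odd_of_ne_two hp2) hpI hr hxI hx
    exact ih (r / 2) (by omega) (by omega) (by omega) huI hu
  · obtain ⟨z, hzI, s, hs0, hsr, hz⟩ := exists_mem_normSq_eq_mul_lt_of_odd hp hpI hr hr1 hrp hxI hx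
    exact ih s hsr hs0 (hsr.trans hrp) hzI hz

lemma exists_mem_span_pair_normSq_eq {p : ℕ} (hp : p.Prime) (hp2 : p ≠ 2) {a : ℍ[ℤ]}
    (hpa : (p : ℤ) ∣ normSq a) (ha : ¬ (p : ℍ[ℤ]) ∣ a) :
    ∃ π ∈ Ideal.span {a, (p : ℍ[ℤ])}, normSq π = p := by
  obtain ⟨q, r, hrp, hr⟩ := exists_normSq_sub_mul_eq (hp.odd_of_ne_two hp2) hpa
  have hpI : (p : ℍ[ℤ]) ∈ Ideal.span {a, (p : ℍ[ℤ])} := Ideal.subset_span (by simp)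
  have haI : a - p * q ∈ Ideal.span {a, (p : ℍ[ℤ])} := by
    rw [Nat.cast_comm]
    exact sub_mem (Ideal.subset_span (by simp)) (Ideal.mul_mem_left _ _ hpI)
  refine exists_mem_normSq_eq_of_mem hp hp2 hpI (Nat.pos_of_ne_zero fun h0 ↦ ha ⟨q, ?_⟩) hrp haI hr
  simpa [h0, sub_eq_zero] using hr

lemma exists_normSq_eq_forall_eq_mul {p : ℕ} (hp : p.Prime) (hp2 : p ≠ 2) {a : ℍ[ℤ]}
    (hpa : (p : ℤ) ∣ normSq a) (ha : ¬ ((p : ℤ) : ℍ[ℤ]) ∣ a) {ι : Type*} {v : ι → ℍ[ℤ]}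
    (hv : ∀ i, ((p : ℤ) : ℍ[ℤ]) ∣ v i * star a) :
    ∃ π : ℍ[ℤ], normSq π = p ∧ ∀ i, ∃ u, v i = u * π := by
  obtain ⟨π, hπI, hπ⟩ := exists_mem_span_pair_normSq_eq hp hp2 hpa ha
  refine ⟨π, hπ, fun i ↦ ?_⟩
  have hπ0 : star π ≠ 0 := star_ne_zero.mpr fun h ↦ hp.ne_zero (by simpa [h] using hπ.symm)
  have hviπ : ((p : ℤ) : ℍ[ℤ]) ∣ v i * star π := by
    obtain ⟨y, z, rfl⟩ := Ideal.mem_span_pair.mp hπI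
    have hexpand : v i * star (y * a + z * p) = v i * star a * star y + p * (v i * star z) := by
      rw [star_add, star_mul, star_mul, star_natCast, mul_add, ← mul_assoc, ← mul_assoc,
        ← Nat.cast_comm p (v i), mul_assoc _ (v i)]
    rw [hexpand]
    exact ((hv i).mul_right _).add (dvd_mul_right _ _)
  obtain ⟨u, hu⟩ : star π ∣ star (v i) := by
    refine dvd_of_coe_normSq_dvd_star_mul hπ0 ?_
    rwa [normSq_star, hπ, ← star_mul, coe_dvd_quaternion_star_iff]
  exact ⟨star u, star_injective (by rw [hu, star_mul, star_star])⟩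

lemma exists_normSq_eq_forall_dvd {p : ℕ} (hp : p.Prime) (hp2 : p ≠ 2) {a : ℍ[ℤ]}
    (hpa : (p : ℤ) ∣ normSq a) (ha : ¬ ((p : ℤ) : ℍ[ℤ]) ∣ a) {ι : Type*} {v : ι → ℍ[ℤ]}
    (hv : ∀ i, ((p : ℤ) : ℍ[ℤ]) ∣ star a * v i) :
    ∃ π : ℍ[ℤ], normSq π = p ∧ ∀ i, π ∣ v i := by
  obtain ⟨π, hπ, hπv⟩ := exists_normSq_eq_forall_eq_mul (a := star a) (v := fun i ↦ star (v i))
    hp hp2 (by rwa [normSq_star]) (coe_dvd_quaternion_star_iff.not.mpr ha)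
    fun i ↦ by rw [← star_mul]; exact coe_dvd_quaternion_star_iff.mpr (hv i)
  refine ⟨star π, by rwa [normSq_star], fun i ↦ ?_⟩
  obtain ⟨u, hu⟩ := hπv i
  exact ⟨star u, star_injective (by rw [hu, star_mul, star_star, star_star])⟩

lemma exists_normSq_eq_natCast (n : ℕ) : ∃ a : ℍ[ℤ], normSq a = n := by
  obtain ⟨a, b, c, d, h⟩ := Nat.sum_four_squares n
  refine ⟨(equivTuple ℤ).symm ![a, b, c, d], ?_⟩
  rw [normSq_def', ← h]
  simp

lemma exists_normSq_eq_forall_dvd_or_forall_eq_mul {p : ℕ} (hp : p.Prime) {ι : Type*}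
    {v : ι → ℍ[ℤ]} (hv : ∀ i j, (p : ℤ) ∣ (v i * star (v j)).re) :
    ∃ π : ℍ[ℤ], normSq π = p ∧ ((∀ i, π ∣ v i) ∨ ∀ i, ∃ u, v i = u * π) := by
  obtain rfl | hp2 := eq_or_ne p 2
  · obtain ⟨π, hπ, hπv⟩ := exists_normSq_eq_two_forall_dvd fun i j ↦ even_iff_two_dvd.mpr (hv i j)
    exact ⟨π, hπ, .inl hπv⟩
  by_cases! hpv : ∀ i, ((p : ℤ) : ℍ[ℤ]) ∣ v i
  · obtain ⟨π, hπ⟩ := exists_normSq_eq_natCast p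
    refine ⟨π, hπ, .inl fun i ↦ (Dvd.intro (star π) ?_).trans (hpv i)⟩
    rw [Quaternion.self_mul_star, hπ]
    rfl
  obtain ⟨i, hi⟩ := hpv
  have hnorm (j) : (p : ℤ) ∣ normSq (v j) := by simpa only [normSq_def] using hv j j
  have hp2' : ¬ (p : ℤ) ∣ 2 := by
    exact_mod_cast fun h ↦ hp2 ((Nat.prime_dvd_prime_iff_eq hp Nat.prime_two).mp h)
  rcases forall_coe_dvd_star_mul_or_forall_coe_dvd_mul_star (Nat.prime_iff_prime_int.mp hp) hp2'
    (hnorm i) (hv · i) hv with h | h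
  · obtain ⟨π, hπ, hπv⟩ := exists_normSq_eq_forall_dvd hp hp2 (hnorm i) hi h
    exact ⟨π, hπ, .inl hπv⟩
  · obtain ⟨π, hπ, hπv⟩ := exists_normSq_eq_forall_eq_mul hp hp2 (hnorm i) hi h
    exact ⟨π, hπ, .inr hπv⟩

lemma exists_forall_ne_equivTuple_eq_zero {a : ℍ[ℤ]} (ha : normSq a = 1) :
    ∃ s, ∀ t ≠ s, equivTuple ℤ a t = 0 := by
  rw [normSq_def, re_mul_star_eq_sum] at ha
  by_contra! h
  obtain ⟨s, -, hs⟩ := h 0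
  obtain ⟨t, hts, ht⟩ := h s
  have hle : ∑ r ∈ {t, s}, equivTuple ℤ a r * equivTuple ℤ a r ≤ 1 :=
    ha ▸ Finset.sum_le_univ_sum_of_nonneg fun _ ↦ mul_self_nonneg _
  rw [Finset.sum_pair hts] at hle
  linarith [mul_self_pos.mpr hs, mul_self_pos.mpr ht]

lemma exists_normSq_eq_one_forall_re_mul_star_eq_zero {ι : Type*} [Fintype ι]
    (hι : Fintype.card ι ≤ 3) {v : ι → ℍ[ℤ]} (hv : ∀ i, normSq (v i) = 1) :
    ∃ w : ℍ[ℤ], normSq w = 1 ∧ ∀ i, (v i * star w).re = 0 := by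
  choose s hs using fun i ↦ exists_forall_ne_equivTuple_eq_zero (hv i)
  have hsurj : ¬ s.Surjective := fun h ↦ by
    simpa using (Fintype.card_le_of_surjective s h).trans hι
  obtain ⟨t, ht⟩ := not_forall.mp hsurj
  refine ⟨quaternionUnit ℤ t, normSq_quaternionUnit t, fun i ↦ ?_⟩
  rw [re_mul_star_quaternionUnit]
  exact hs i t fun h ↦ ht ⟨i, h.symm⟩

lemma exists_forall_re_eq_mul_forall_mem_range {p : ℕ} (hp : p.Prime) {ι : Type*}
    {v : ι → ℍ[ℤ]} (hv : ∀ i j, (p : ℤ) ∣ (v i * star (v j)).re) :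
    ∃ f : ℍ[ℤ] → ℍ[ℤ], (∀ b c, (f b * star (f c)).re = p * (b * star c).re) ∧
      ∀ i, v i ∈ Set.range f := by
  obtain ⟨π, hπ, h | h⟩ := exists_normSq_eq_forall_dvd_or_forall_eq_mul hp hv
  · refine ⟨(π * ·), fun b c ↦ hπ ▸ re_mul_mul_star_mul π b c, fun i ↦ ?_⟩
    obtain ⟨u, hu⟩ := h i
    exact ⟨u, hu.symm⟩
  · refine ⟨(· * π), fun b c ↦ hπ ▸ re_mul_mul_star_mul_right π b c, fun i ↦ ?_⟩
    obtain ⟨u, hu⟩ := h i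
    exact ⟨u, hu.symm⟩

theorem exists_normSq_eq_forall_re_mul_star_eq_zero (n : ℕ) {ι : Type*} [Fintype ι]
    (hι : Fintype.card ι ≤ 3) {v : ι → ℍ[ℤ]} (hnorm : ∀ i, normSq (v i) = n)
    (horth : ∀ i j, i ≠ j → (v i * star (v j)).re = 0) :
    ∃ w : ℍ[ℤ], normSq w = n ∧ ∀ i, (v i * star w).re = 0 := by
  induction n using induction_on_primes generalizing v with
  | zero => exact ⟨0, by simp⟩
  | one => simpa using exists_normSq_eq_one_forall_re_mul_star_eq_zero hι (by simpa using hnorm)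
  | prime_mul p n hp ih =>
    have hp0 : (p : ℤ) ≠ 0 := by exact_mod_cast hp.ne_zero
    have hdvd (i j) : (p : ℤ) ∣ (v i * star (v j)).re := by
      obtain rfl | hij := eq_or_ne i j
      · rw [← normSq_def, hnorm, Nat.cast_mul]
        exact dvd_mul_right _ _
      · rw [horth i j hij]
        exact dvd_zero _
    obtain ⟨f, hf, hvf⟩ := exists_forall_re_eq_mul_forall_mem_range hp hdvd
    have hfnorm (b) : normSq (f b) = p * normSq b := by rw [normSq_def, hf, ← normSq_def]
    choose u hu using hvf
    simp only [← hu, hf, hfnorm, Nat.cast_mul, mul_eq_mul_left_iff, mul_eq_zero, hp0, or_false,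
      false_or] at hnorm horth ⊢
    obtain ⟨w, hw, huw⟩ := ih hnorm horth
    exact ⟨f w, by rw [hfnorm, hw], fun i ↦ by rw [hf, huw, mul_zero]⟩

theorem extended_lagrange_four_square_general (n : ℕ) {ι : Type*} [Fintype ι]
    (hι : Fintype.card ι ≤ 3) (v : ι → Fin 4 → ℤ) (hnorm : ∀ i, ∑ t, v i t * v i t = (n : ℤ))
    (horth : ∀ i j, i ≠ j → ∑ t, v i t * v j t = 0) :
    ∃ w : Fin 4 → ℤ, (∀ i, ∑ t, v i t * w t = 0) ∧
      w 0 ^ 2 + w 1 ^ 2 + w 2 ^ 2 + w 3 ^ 2 = (n : ℤ) := by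
  let e := equivTuple ℤ
  have hre (x y : Fin 4 → ℤ) : (e.symm x * star (e.symm y)).re = ∑ t, x t * y t := by
    rw [re_mul_star_eq_sum, e.apply_symm_apply, e.apply_symm_apply]
  obtain ⟨w, hw, hvw⟩ := exists_normSq_eq_forall_re_mul_star_eq_zero n hι
    (v := fun i ↦ e.symm (v i)) (fun i ↦ by rw [normSq_def, hre, hnorm])
    fun i j hij ↦ by rw [hre, horth i j hij]
  refine ⟨e w, fun i ↦ ?_, by rw [← hw, normSq_def']; rfl⟩
  rw [← hre, e.symm_apply_apply, hvw]

/-- Extended Lagrange four-square theorem: a p-orthonormal system of k vectors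
(1 ≤ k ≤ 3) in ℤ⁴ admits an orthogonal vector of norm p. -/
theorem extended_lagrange_four_square
    (p : ℕ) (hp : p.Prime) (k : ℕ) (hk1 : 1 ≤ k) (hk3 : k ≤ 3)
    (v : Fin k → (Fin 4 → ℤ))
    (hnorm : ∀ i, ∑ t, v i t * v i t = (p : ℤ))
    (horth : ∀ i j, i ≠ j → ∑ t, v i t * v j t = 0) :
    ∃ w : Fin 4 → ℤ, (∀ i, ∑ t, v i t * w t = 0) ∧
      w 0 ^ 2 + w 1 ^ 2 + w 2 ^ 2 + w 3 ^ 2 = (p : ℤ) :=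
  extended_lagrange_four_square_general p (by simpa using hk3) v hnorm horth
end

section
/- Let p be a prime number and let S = {v₁,…,v_k} ⊆ ℤ⁴ with 1 ≤ k ≤ 3 be a p-orthonormal system. Then S can be extended to a p-orthonormal base: there exist vectors v_{k+1},…,v₄ ∈ ℤ⁴ such that v₁,…,v₄ satisfy N(vᵢ) = p for all 1 ≤ i ≤ 4 and ⟨vᵢ|vⱼ⟩ = 0 for all 1 ≤ i < j ≤ 4. -/
/-!
A system of fewer than four vectors can be enlarged by one vector, so a base is reached step by
step. Identify `ℤ⁴` with the integral quaternions `ℍ[ℤ]`.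

* The empty system is extended by Lagrange's four-square theorem, and a single `a` by `i a`.
* If `a` and `b` are orthogonal of equal norm, then `a + b √-1` is an isotropic vector of `ℤ[√-1]⁴`,
  that is, a `2 × 2` matrix over `ℤ[√-1]` of determinant zero. Unique factorization in `ℤ[√-1]`
  splits it as column times row, which amounts to `2 a = q r` and `2 b = q i r` for integral
  quaternions `q` and `r`. Then `q j r / 2` extends the system; it is integral since `ℍ[ℤ]` is
  commutative modulo `2`, whence `q j r ≡ j q r ≡ 0`.
* Three vectors `a`, `b`, `c` are extended by `a b̄ c / p`. It is integral since the columns of the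
  square matrix with rows `p a`, `p b`, `p c`, `a b̄ c` again have equal norm `p³`, so that the
  square of each coordinate of `a b̄ c` is divisible by `p²`.
-/

open Matrix Quaternion

/-- The rows `v i` are pairwise orthogonal vectors of norm `p` for the standard dot product; the
norm is not square-rooted, so for `R = ℤ` these are the `p`-orthonormal systems. -/
structure IsPOrthonormal {ι κ R : Type*} [Fintype κ] [CommRing R] (p : R) (v : ι → κ → R) :
    Prop where
  norm_eq : ∀ i, v i ⬝ᵥ v i = p
  orthogonal : ∀ i j, i ≠ j → v i ⬝ᵥ v j = 0

theorem isPOrthonormal_iff_mul_transpose {ι κ R : Type*} [DecidableEq ι] [Fintype κ] [CommRing R]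
    {p : R} {v : ι → κ → R} :
    IsPOrthonormal p v ↔ of v * (of v)ᵀ = p • (1 : Matrix ι ι R) := by
  constructor
  · intro hv
    ext i j
    obtain rfl | hij := eq_or_ne i j
    · simpa [mul_apply, dotProduct] using hv.norm_eq i
    · simpa [mul_apply, dotProduct, hij] using hv.orthogonal i j hij
  · intro hv
    have entry (i j : ι) : v i ⬝ᵥ v j = (p • (1 : Matrix ι ι R)) i j := congrFun₂ hv i j
    exact ⟨fun i => by simp [entry], fun i j hij => by simp [entry, hij]⟩

namespace IsPOrthonormal

variable {ι κ R : Type*} [Fintype κ] [CommRing R] {p : R}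

theorem smul {v : ι → κ → R} (hv : IsPOrthonormal p v) (m : R) :
    IsPOrthonormal (p * m ^ 2) (m • v) where
  norm_eq i := by
    simp only [Pi.smul_apply, smul_dotProduct, dotProduct_smul, hv.norm_eq, smul_eq_mul]
    ring
  orthogonal i j hij := by
    simp only [Pi.smul_apply, smul_dotProduct, dotProduct_smul, hv.orthogonal i j hij, smul_zero]

theorem snoc {k : ℕ} {v : Fin k → κ → R} (hv : IsPOrthonormal p v) {d : κ → R}
    (hd : d ⬝ᵥ d = p) (hvd : ∀ i, v i ⬝ᵥ d = 0) :
    IsPOrthonormal p (Fin.snoc v d : Fin (k + 1) → κ → R) where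
  norm_eq := by
    simpa only [Fin.forall_fin_succ', Fin.snoc_castSucc, Fin.snoc_last] using ⟨hv.norm_eq, hd⟩
  orthogonal i j hij := by
    induction i using Fin.lastCases with
    | last =>
      induction j using Fin.lastCases with
      | last => exact absurd rfl hij
      | cast j => simpa only [Fin.snoc_castSucc, Fin.snoc_last, dotProduct_comm] using hvd j
    | cast i =>
      induction j using Fin.lastCases with
      | last => simpa only [Fin.snoc_castSucc, Fin.snoc_last] using hvd i
      | cast j =>
        simpa only [Fin.snoc_castSucc] using hv.orthogonal i j fun h => hij (congrArg _ h)

variable [IsDomain R]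

theorem transpose {A : κ → κ → R} (hp : p ≠ 0) (hA : IsPOrthonormal p A) :
    IsPOrthonormal p fun i j => A j i := by
  classical
  rw [isPOrthonormal_iff_mul_transpose] at hA
  have det_ne_zero : (of A).det ≠ 0 := by
    intro h
    have := congrArg det hA
    rw [det_mul, h, zero_mul, det_smul, det_one, mul_one] at this
    exact pow_ne_zero _ hp this.symm
  have regular : IsRegular (of A) :=
    isRegular_of_isLeftRegular_det (IsRegular.of_ne_zero det_ne_zero).left
  refine isPOrthonormal_iff_mul_transpose.2 (regular.left ?_)
  change of A * ((of A)ᵀ * of A) = of A * p • 1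
  rw [← Matrix.mul_assoc, hA, Matrix.smul_mul, Matrix.mul_smul, Matrix.one_mul, Matrix.mul_one]

theorem dvd_of_orthogonal [IsIntegrallyClosed R] {n : ℕ} {v : Fin n → Fin (n + 1) → R}
    (hv : IsPOrthonormal p v) (hp : p ≠ 0) {m : R} (hm : m ≠ 0) {e : Fin (n + 1) → R}
    (he : e ⬝ᵥ e = p * m ^ 2) (hve : ∀ i, v i ⬝ᵥ e = 0) (t : Fin (n + 1)) : m ∣ e t := by
  have hrows := (hv.smul m).snoc he fun i => by
    rw [Pi.smul_apply, smul_dotProduct, hve, smul_zero]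
  have column_norm := (hrows.transpose (mul_ne_zero hp (pow_ne_zero 2 hm))).norm_eq t
  simp only [dotProduct, Fin.sum_univ_castSucc, Fin.snoc_castSucc, Fin.snoc_last, Pi.smul_apply,
    smul_eq_mul] at column_norm
  refine (IsIntegrallyClosed.pow_dvd_pow_iff two_ne_zero).1 ⟨p - ∑ i, v i t * v i t, ?_⟩
  have hsum : ∑ i, m * v i t * (m * v i t) = m ^ 2 * ∑ i, v i t * v i t := by
    rw [Finset.mul_sum]
    exact Finset.sum_congr rfl fun i _ => by ring
  linear_combination column_norm - hsum

end IsPOrthonormal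

section Quaternion

variable {R : Type*} [CommRing R]

/-- The quaternion `a + b i + c j + d k`. The anonymous constructor would have the type
`ℍ[R,-1,0,-1]`, to which the `simp` lemmas about `ℍ[R]` do not apply. -/
@[simps]
def mkQuaternion (a b c d : R) : ℍ[R] :=
  ⟨a, b, c, d⟩

theorem dotProduct_equivTuple (x y : ℍ[R]) :
    Quaternion.equivTuple R x ⬝ᵥ Quaternion.equivTuple R y = (x * star y).re := by
  simp [dotProduct, Fin.sum_univ_four]

theorem isPOrthonormal_equivTuple_comp_iff {ι : Type*} {p : R} {x : ι → ℍ[R]} :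
    IsPOrthonormal p (Quaternion.equivTuple R ∘ x) ↔
      (∀ i, normSq (x i) = p) ∧ ∀ i j, i ≠ j → (x i * star (x j)).re = 0 := by
  simp only [normSq_def, ← dotProduct_equivTuple]
  exact ⟨fun h => ⟨h.norm_eq, h.orthogonal⟩, fun h => ⟨h.1, h.2⟩⟩

theorem re_mul_mul_mul_star_mul_mul (q x y r : ℍ[R]) :
    (q * x * r * star (q * y * r)).re = normSq q * normSq r * (x * star y).re := by
  simp only [star_mul, re_mul, imI_mul, imJ_mul, imK_mul, re_star, imI_star, imJ_star,
    imK_star, normSq_def']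
  ring

theorem re_left_mul_star_triple (x y z : ℍ[R]) :
    (x * star (x * star y * z)).re = normSq x * (y * star z).re := by
  simp only [star_mul, star_star, re_mul, imI_mul, imJ_mul, imK_mul, re_star, imI_star, imJ_star,
    imK_star, normSq_def']
  ring

theorem re_middle_mul_star_triple (x y z : ℍ[R]) :
    (y * star (x * star y * z)).re =
      2 * (x * star y).re * (y * star z).re - normSq y * (x * star z).re := by
  simp only [star_mul, star_star, re_mul, imI_mul, imJ_mul, imK_mul, re_star, imI_star, imJ_star,
    imK_star, normSq_def']
  ring

theorem re_right_mul_star_triple (x y z : ℍ[R]) :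
    (z * star (x * star y * z)).re = normSq z * (x * star y).re := by
  simp only [star_mul, star_star, re_mul, imI_mul, imJ_mul, imK_mul, re_star, imI_star, imJ_star,
    imK_star, normSq_def']
  ring

theorem two_dvd_mul_sub_mul (x y : ℍ[R]) : (2 : ℍ[R]) ∣ x * y - y * x := by
  refine ⟨mkQuaternion 0 (x.imJ * y.imK - x.imK * y.imJ) (x.imK * y.imI - x.imI * y.imK)
    (x.imI * y.imJ - x.imJ * y.imI), ?_⟩
  rw [two_mul]
  ext <;> simp only [re_sub, imI_sub, imJ_sub, imK_sub, re_add, imI_add, imJ_add, imK_add,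
    re_mul, imI_mul, imJ_mul, imK_mul, re_mkQuaternion, imI_mkQuaternion, imJ_mkQuaternion,
    imK_mkQuaternion] <;> ring

theorem two_dvd_mul_mul {q r : ℍ[R]} (h : (2 : ℍ[R]) ∣ q * r) (s : ℍ[R]) :
    (2 : ℍ[R]) ∣ q * s * r := by
  obtain ⟨a, ha⟩ := h
  obtain ⟨c, hc⟩ := two_dvd_mul_sub_mul q s
  refine ⟨c * r + s * a, ?_⟩
  calc q * s * r = (q * s - s * q) * r + s * (q * r) := by noncomm_ring
    _ = 2 * (c * r + s * a) := by rw [hc, ha]; noncomm_ring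

end Quaternion

theorem exists_eq_mul_of_mul_eq_mul {M : Type*} [CommMonoidWithZero M] [IsCancelMulZero M]
    [DecompositionMonoid M] {a b c d : M} (h : a * b = c * d) :
    ∃ x y z w, a = x * y ∧ b = z * w ∧ c = x * w ∧ d = z * y := by
  obtain rfl | ha := eq_or_ne a 0
  · obtain rfl | rfl := mul_eq_zero.1 (h.symm.trans (zero_mul b))
    · exact ⟨0, d, 1, b, by simp⟩
    · exact ⟨c, 0, b, 1, by simp⟩
  · obtain ⟨x, y, ⟨w, rfl⟩, ⟨z, rfl⟩, rfl⟩ := exists_dvd_and_dvd_of_dvd_mul ⟨b, h.symm⟩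
    refine ⟨x, y, z, w, rfl, mul_left_cancel₀ ha ?_, rfl, mul_comm y z⟩
    rw [h, mul_mul_mul_comm, mul_comm w z]

theorem exists_two_mul_eq_mul {a b : ℍ[ℤ]} (hnorm : normSq a = normSq b)
    (horth : (a * star b).re = 0) :
    ∃ q r : ℍ[ℤ], 2 * a = q * r ∧ 2 * b = q * mkQuaternion 0 1 0 0 * r := by
  have isotropic : (⟨a.re + b.imI, a.imI - b.re⟩ * ⟨b.imI - a.re, a.imI + b.re⟩ : GaussianInt) =
      ⟨a.imJ + b.imK, a.imK - b.imJ⟩ * ⟨a.imJ - b.imK, -(a.imK + b.imJ)⟩ := by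
    simp only [normSq_def'] at hnorm
    simp only [re_mul, re_star, imI_star, imJ_star, imK_star] at horth
    ext <;> simp only [Zsqrtd.re_mul, Zsqrtd.im_mul]
    · linear_combination -hnorm
    · linear_combination 2 * horth
  obtain ⟨x, y, z, w, h₁, h₂, h₃, h₄⟩ := exists_eq_mul_of_mul_eq_mul isotropic
  simp only [Zsqrtd.ext_iff, Zsqrtd.re_mul, Zsqrtd.im_mul] at h₁ h₂ h₃ h₄
  -- `q = x + j z` and `r = y + w j`, where `ℤ[√-1]` sits inside `ℍ[ℤ]` as `ℤ + ℤ i`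
  refine ⟨mkQuaternion x.re x.im z.re (-z.im), mkQuaternion y.re y.im w.re w.im, ?_, ?_⟩ <;>
    rw [two_mul] <;>
    ext <;> simp only [re_add, imI_add, imJ_add, imK_add, re_mul, imI_mul, imJ_mul, imK_mul,
      re_mkQuaternion, imI_mkQuaternion, imJ_mkQuaternion, imK_mkQuaternion] <;> lia

theorem exists_normSq_eq_natCast_s1 (p : ℕ) : ∃ z : ℍ[ℤ], normSq z = p := by
  obtain ⟨a, b, c, d, h⟩ := Nat.sum_four_squares p
  exact ⟨mkQuaternion a b c d, by simp [normSq_def', ← h]⟩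

theorem exists_normSq_eq_and_orthogonal {R : Type*} [CommRing R] (x : ℍ[R]) :
    ∃ z, normSq z = normSq x ∧ (x * star z).re = 0 := by
  refine ⟨mkQuaternion 0 1 0 0 * x, ?_, ?_⟩
  · simp [normSq_def' (mkQuaternion _ _ _ _)]
  · simpa using re_mul_mul_mul_star_mul_mul 1 1 (mkQuaternion 0 1 0 0) x

theorem exists_normSq_eq_and_orthogonal_pair {x y : ℍ[ℤ]} (hnorm : normSq x = normSq y)
    (horth : (x * star y).re = 0) :
    ∃ z, normSq z = normSq x ∧ (x * star z).re = 0 ∧ (y * star z).re = 0 := by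
  obtain ⟨q, r, hx, hy⟩ := exists_two_mul_eq_mul hnorm horth
  obtain ⟨z, hz⟩ := two_dvd_mul_mul (Dvd.intro x hx) (mkQuaternion 0 0 1 0)
  have normSq_two : normSq (2 : ℍ[ℤ]) = 4 := by simpa using normSq_natCast (R := ℤ) 2
  have orthogonal_of_double {w : ℍ[ℤ]} (h : (2 * w * star (2 * z)).re = 0) :
      (w * star z).re = 0 := by
    have scale := re_mul_mul_mul_star_mul_mul 2 w z 1
    rw [mul_one, mul_one, h, normSq_two, map_one, mul_one] at scale
    exact (mul_eq_zero.1 scale.symm).resolve_left four_ne_zero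
  refine ⟨z, ?_, orthogonal_of_double ?_, orthogonal_of_double ?_⟩
  · have h : normSq (2 * z) = normSq (2 * x) := by
      rw [← hz, hx]
      simp [normSq_def' (mkQuaternion _ _ _ _)]
    simpa [normSq_two] using h
  · rw [hx, ← hz]
    simpa using re_mul_mul_mul_star_mul_mul q 1 (mkQuaternion 0 0 1 0) r
  · rw [hy, ← hz, re_mul_mul_mul_star_mul_mul]
    simp

theorem exists_normSq_eq_and_orthogonal_triple {p : ℤ} {x : Fin 3 → ℍ[ℤ]}
    (hx : IsPOrthonormal p (Quaternion.equivTuple ℤ ∘ x)) :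
    ∃ w, normSq w = p ∧ ∀ i, (x i * star w).re = 0 := by
  obtain rfl | hp := eq_or_ne p 0
  · exact ⟨0, by simp⟩
  obtain ⟨norm_eq, orthogonal⟩ := isPOrthonormal_equivTuple_comp_iff.1 hx
  set e := x 0 * star (x 1) * x 2 with he
  have normSq_e : normSq e = p * p ^ 2 := by
    rw [he, map_mul, map_mul, normSq_star, norm_eq, norm_eq, norm_eq]
    ring
  have orthogonal_e : ∀ i, (x i * star e).re = 0 := by
    have h₀₁ := orthogonal 0 1 (by decide)
    have h₁₂ := orthogonal 1 2 (by decide)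
    have h₀₂ := orthogonal 0 2 (by decide)
    have left : (x 0 * star e).re = 0 := by
      rw [he, re_left_mul_star_triple, h₁₂, mul_zero]
    have middle : (x 1 * star e).re = 0 := by
      rw [he, re_middle_mul_star_triple, h₀₁, h₀₂]
      ring
    have right : (x 2 * star e).re = 0 := by
      rw [he, re_right_mul_star_triple, h₀₁, mul_zero]
    exact Fin.forall_fin_succ.2 ⟨left, Fin.forall_fin_two.2 ⟨middle, right⟩⟩
  have dvd_e : ∀ t, p ∣ Quaternion.equivTuple ℤ e t :=
    hx.dvd_of_orthogonal hp hp (by rw [dotProduct_equivTuple, ← normSq_def, normSq_e])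
      fun i => by rw [Function.comp_apply, dotProduct_equivTuple, orthogonal_e]
  choose c hc using dvd_e
  obtain ⟨w, rfl⟩ := (Quaternion.equivTuple ℤ).surjective c
  have e_eq : e = p • w := by
    apply (Quaternion.equivTuple ℤ).injective
    ext t
    rw [hc]
    fin_cases t <;> simp
  refine ⟨w, ?_, fun i => ?_⟩
  · apply mul_left_cancel₀ (pow_ne_zero 2 hp)
    rw [← normSq_smul, ← e_eq, normSq_e, mul_comm]
  · have := orthogonal_e i
    rw [e_eq, Quaternion.star_smul, mul_smul_comm, re_smul] at this
    exact (smul_eq_zero.1 this).resolve_left hp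

theorem IsPOrthonormal.exists_orthogonal {p k : ℕ} (hk : k < 4) {v : Fin k → Fin 4 → ℤ}
    (hv : IsPOrthonormal (p : ℤ) v) :
    ∃ d : Fin 4 → ℤ, d ⬝ᵥ d = p ∧ ∀ i, v i ⬝ᵥ d = 0 := by
  obtain ⟨x, rfl⟩ : ∃ x : Fin k → ℍ[ℤ], v = Quaternion.equivTuple ℤ ∘ x :=
    ⟨(Quaternion.equivTuple ℤ).symm ∘ v, by simp [← Function.comp_assoc]⟩
  suffices ∃ z : ℍ[ℤ], normSq z = (p : ℤ) ∧ ∀ i, (x i * star z).re = 0 by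
    obtain ⟨z, hz, hxz⟩ := this
    refine ⟨Quaternion.equivTuple ℤ z, ?_, fun i => ?_⟩
    · rw [dotProduct_equivTuple, ← normSq_def, hz]
    · rw [Function.comp_apply, dotProduct_equivTuple, hxz]
  obtain ⟨norm_eq, orthogonal⟩ := isPOrthonormal_equivTuple_comp_iff.1 hv
  interval_cases k
  · obtain ⟨z, hz⟩ := exists_normSq_eq_natCast_s1 p
    exact ⟨z, hz, fun i => i.elim0⟩
  · obtain ⟨z, hz, h₀⟩ := exists_normSq_eq_and_orthogonal (x 0)
    exact ⟨z, hz.trans (norm_eq 0), Fin.forall_fin_one.2 h₀⟩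
  · obtain ⟨z, hz, h₀, h₁⟩ := exists_normSq_eq_and_orthogonal_pair
      ((norm_eq 0).trans (norm_eq 1).symm) (orthogonal 0 1 zero_ne_one)
    exact ⟨z, hz.trans (norm_eq 0), Fin.forall_fin_two.2 ⟨h₀, h₁⟩⟩
  · exact exists_normSq_eq_and_orthogonal_triple hv

theorem p_orthonormal_system_extends_to_base_general {p k : ℕ} (hk : k ≤ 4)
    {v : Fin k → Fin 4 → ℤ} (hv : IsPOrthonormal (p : ℤ) v) :
    ∃ w : Fin 4 → Fin 4 → ℤ, (∀ i, w (Fin.castLE hk i) = v i) ∧ IsPOrthonormal (p : ℤ) w := by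
  induction hk using Nat.decreasingInduction with
  | self => exact ⟨v, fun _ => rfl, hv⟩
  | of_succ k hk ih =>
    obtain ⟨d, hd, hvd⟩ := hv.exists_orthogonal hk
    obtain ⟨w, hw, hwp⟩ := ih (hv.snoc hd hvd)
    refine ⟨w, fun i => ?_, hwp⟩
    exact (hw i.castSucc).trans (Fin.snoc_castSucc (α := fun _ => Fin 4 → ℤ) ..)

/-- A p-orthonormal system of k vectors (1 ≤ k ≤ 3) in ℤ⁴ extends to a
p-orthonormal base of four vectors. -/
theorem p_orthonormal_system_extends_to_base
    (p : ℕ) (hp : p.Prime) (k : ℕ) (hk1 : 1 ≤ k) (hk3 : k ≤ 3)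
    (v : Fin k → (Fin 4 → ℤ))
    (hnorm : ∀ i, ∑ t, v i t * v i t = (p : ℤ))
    (horth : ∀ i j, i ≠ j → ∑ t, v i t * v j t = 0) :
    ∃ w : Fin 4 → (Fin 4 → ℤ),
      (∀ i : Fin k, w (Fin.castLE (by omega) i) = v i) ∧
      (∀ i, ∑ t, w i t * w i t = (p : ℤ)) ∧
      (∀ i j, i ≠ j → ∑ t, w i t * w j t = 0) := by
  obtain ⟨w, hw, hwp⟩ := p_orthonormal_system_extends_to_base_general
    (hk3.trans (by decide)) (IsPOrthonormal.mk hnorm horth)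
  exact ⟨w, hw, hwp.norm_eq, hwp.orthogonal⟩
end

section
/- Let p ≥ 1 be an integer and let S = {v₁, v₂} be a p-orthonormal system in ℤ⁴ whose support is contained in a set of exactly two coordinate indices (i.e. there are indices a ≠ b such that every coordinate of v₁ and v₂ outside {a,b} is zero). Then there exists v₃ ∈ ℤ⁴ with ⟨v₁|v₃⟩ = 0, ⟨v₂|v₃⟩ = 0 and N(v₃) = p. -/
/-!
A set containing at most half of the coordinates can be moved off itself by a permutation of the
coordinates. Permuting the coordinates of a vector supported on the set preserves its norm and
makes it orthogonal to every vector supported on the set.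
-/

lemma exists_perm_forall_mem_apply_notMem {α : Type*} [Fintype α] {s : Finset α}
    (hs : 2 * s.card ≤ Fintype.card α) : ∃ σ : Equiv.Perm α, ∀ x ∈ s, σ x ∉ s := by
  classical
  have hcard : s.card ≤ sᶜ.card := by
    rw [Finset.card_compl]
    lia
  obtain ⟨t, ht_sub, ht_card⟩ := Finset.exists_subset_card_eq hcard
  let e : s ≃ t := Finset.equivOfCardEq ht_card.symm
  exact ⟨e.extendSubtype, fun x hx ↦ Finset.mem_compl.mp (ht_sub (e.extendSubtype_mem x hx))⟩

lemma dotProduct_eq_zero_of_disjoint_support {ι R : Type*} [Fintype ι]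
    [NonUnitalNonAssocSemiring R] {v w : ι → R}
    (h : Disjoint (Function.support v) (Function.support w)) : v ⬝ᵥ w = 0 := by
  refine Finset.sum_eq_zero fun i _ ↦ ?_
  by_cases hi : v i = 0
  · exact mul_eq_zero_of_left hi (w i)
  · exact mul_eq_zero_of_right (v i) (Function.notMem_support.mp (h.notMem_of_mem_left hi))

theorem two_vector_supp_two_extension_general {ι R : Type*} [Fintype ι]
    [NonUnitalNonAssocSemiring R] {s : Finset ι} (hs : 2 * s.card ≤ Fintype.card ι)
    {v : ι → R} (hv : Function.support v ⊆ s) :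
    ∃ u : ι → R, (∀ w : ι → R, Function.support w ⊆ s → w ⬝ᵥ u = 0) ∧ u ⬝ᵥ u = v ⬝ᵥ v := by
  obtain ⟨σ, hσ⟩ := exists_perm_forall_mem_apply_notMem hs
  refine ⟨v ∘ σ, fun w hw ↦ ?_, comp_equiv_dotProduct_comp_equiv v v σ⟩
  apply dotProduct_eq_zero_of_disjoint_support
  exact Set.disjoint_left.mpr fun i hwi hvi ↦ hσ i (hw hwi) (hv hvi)

/-- A two-vector p-orthonormal system in ℤ⁴ whose support lies in two coordinate
indices admits a third orthogonal vector of norm p, for every p ≥ 1. -/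
theorem two_vector_supp_two_extension
    (p : ℤ) (hp : 1 ≤ p) (v₁ v₂ : Fin 4 → ℤ)
    (hn1 : ∑ t, v₁ t * v₁ t = p) (hn2 : ∑ t, v₂ t * v₂ t = p)
    (ho : ∑ t, v₁ t * v₂ t = 0)
    (a b : Fin 4) (hab : a ≠ b)
    (hsupp : ∀ i, i ≠ a → i ≠ b → v₁ i = 0 ∧ v₂ i = 0) :
    ∃ v₃ : Fin 4 → ℤ, (∑ t, v₁ t * v₃ t = 0) ∧ (∑ t, v₂ t * v₃ t = 0) ∧
      ∑ t, v₃ t * v₃ t = p := by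
  have hs : ∀ i ∉ (({a, b} : Finset (Fin 4)) : Set (Fin 4)), v₁ i = 0 ∧ v₂ i = 0 := by
    simpa using hsupp
  have h₁ := Function.support_subset_iff'.mpr fun i hi ↦ (hs i hi).1
  have h₂ := Function.support_subset_iff'.mpr fun i hi ↦ (hs i hi).2
  obtain ⟨v₃, horth, hnorm⟩ :=
    two_vector_supp_two_extension_general (Nat.mul_le_mul_left 2 Finset.card_le_two) h₁
  exact ⟨v₃, horth v₁ h₁, horth v₂ h₂, hnorm.trans hn1⟩
end

section
/- Let p ≥ 1 be an integer and let S = {v₁, v₂, v₃} be a p-orthonormal system in ℤ⁴. Then there exists v₄ ∈ ℤ⁴ such that ⟨vᵢ|v₄⟩ = 0 for i = 1, 2, 3 and N(v₄) = p. -/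
/-!
The cofactors along a missing row of an `n × (n + 1)` matrix `A` form a vector orthogonal to every
row of `A`. If the rows are moreover orthogonal of norm `p`, then deleting the column `c` leaves a
square matrix `B` with `B * Bᵀ = p • 1 - c cᵀ`, so the cofactor has square
`p ^ (n - 1) * (p - c ⬝ᵥ c)`. For odd `n` the factor `p ^ (n - 1)` is a square, hence its root
divides the cofactor; after this division the squares of the entries are `p - c ⬝ᵥ c`. The norms
of the `n + 1` columns add up to those of the `n` rows, that is to `n * p`, so these squares add up
to `(n + 1) * p - n * p = p`.
-/

open Matrix

lemma det_smul_one_sub_vecMulVec {R ι : Type*} [CommRing R] [Fintype ι] [DecidableEq ι]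
    (p : R) (u v : ι → R) :
    (p • (1 : Matrix ι ι R) - vecMulVec u v).det =
      p ^ Fintype.card ι - (u ⬝ᵥ v) * p ^ (Fintype.card ι - 1) := by
  have h := congrArg (Polynomial.eval p) (charpoly_vecMulVec u v)
  simpa [eval_charpoly, ← smul_one_eq_diagonal] using h

lemma submatrix_succAbove_mul_submatrix_succAbove {R ι κ : Type*} [NonUnitalNonAssocRing R]
    {n : ℕ} (A : Matrix ι (Fin (n + 1)) R) (B : Matrix (Fin (n + 1)) κ R) (j : Fin (n + 1)) :
    A.submatrix id j.succAbove * B.submatrix j.succAbove id =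
      A * B - vecMulVec (A.col j) (B.row j) := by
  ext i k
  simp [mul_apply, vecMulVec_apply, Fin.sum_univ_succAbove _ j]

section Gram

variable {R ι κ : Type*} [CommSemiring R] [Fintype κ] [DecidableEq ι] {p : R}

lemma of_mul_transpose_eq_smul_one {v : ι → κ → R} (hnorm : ∀ i, v i ⬝ᵥ v i = p)
    (horth : Pairwise fun i j => v i ⬝ᵥ v j = 0) : of v * (of v)ᵀ = p • 1 := by
  ext i j
  obtain rfl | hij := eq_or_ne i j
  · exact (hnorm i).trans (by simp)
  · exact (horth hij).trans (by simp [hij])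

lemma sum_col_dotProduct_col [Fintype ι] {A : Matrix ι κ R} (hA : A * Aᵀ = p • 1) :
    ∑ j, A.col j ⬝ᵥ A.col j = Fintype.card ι * p := by
  calc ∑ j, A.col j ⬝ᵥ A.col j = (Aᵀ * A).trace := rfl
    _ = (A * Aᵀ).trace := trace_mul_comm _ _
    _ = Fintype.card ι * p := by rw [hA, trace_smul, trace_one, smul_eq_mul, mul_comm]

end Gram

section SignedMinors

variable {R : Type*} [CommRing R] {n : ℕ}

/-- The generalized cross product of the rows of an `n × (n + 1)` matrix: its `j`-th entry is the
cofactor obtained by deleting the `j`-th column, signed as if the missing row were on top. -/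
def signedMinors (A : Matrix (Fin n) (Fin (n + 1)) R) (j : Fin (n + 1)) : R :=
  (-1) ^ (j : ℕ) * (A.submatrix id j.succAbove).det

lemma dotProduct_signedMinors (u : Fin (n + 1) → R) (A : Matrix (Fin n) (Fin (n + 1)) R) :
    u ⬝ᵥ signedMinors A = det (of (Fin.cons u A : Fin (n + 1) → Fin (n + 1) → R)) := by
  rw [det_succ_row_zero]
  refine Finset.sum_congr rfl fun j _ => ?_
  rw [signedMinors, mul_left_comm, ← mul_assoc]
  rfl

lemma mulVec_signedMinors (A : Matrix (Fin n) (Fin (n + 1)) R) : A *ᵥ signedMinors A = 0 := by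
  ext i
  exact (dotProduct_signedMinors (A i) A).trans
    (det_zero_of_row_eq (Fin.succ_ne_zero i).symm rfl)

lemma signedMinors_sq {p : R} {A : Matrix (Fin n) (Fin (n + 1)) R} (hA : A * Aᵀ = p • 1)
    (j : Fin (n + 1)) :
    signedMinors A j ^ 2 = p ^ n - (A.col j ⬝ᵥ A.col j) * p ^ (n - 1) := by
  have hgram : A.submatrix id j.succAbove * (A.submatrix id j.succAbove)ᵀ =
      p • 1 - vecMulVec (A.col j) (A.col j) := by
    rw [transpose_submatrix, submatrix_succAbove_mul_submatrix_succAbove, hA, row_transpose]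
  calc signedMinors A j ^ 2 = (A.submatrix id j.succAbove).det ^ 2 := by
        simp [signedMinors, mul_pow, ← pow_mul]
    _ = (A.submatrix id j.succAbove * (A.submatrix id j.succAbove)ᵀ).det := by
        rw [det_mul, det_transpose, sq]
    _ = p ^ n - (A.col j ⬝ᵥ A.col j) * p ^ (n - 1) := by
        rw [hgram, det_smul_one_sub_vecMulVec, Fintype.card_fin]

end SignedMinors

lemma exists_signedMinors_eq_smul {R : Type*} [CommRing R] [IsDomain R] [IsIntegrallyClosed R]
    {m : ℕ} {p : R} {A : Matrix (Fin (2 * m + 1)) (Fin (2 * m + 1 + 1)) R} (hp : p ≠ 0)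
    (hA : A * Aᵀ = p • 1) :
    ∃ w, signedMinors A = p ^ m • w ∧ ∀ j, w j ^ 2 = p - A.col j ⬝ᵥ A.col j := by
  have hsq (j) : signedMinors A j ^ 2 = (p ^ m) ^ 2 * (p - A.col j ⬝ᵥ A.col j) := by
    rw [signedMinors_sq hA, Nat.add_sub_cancel]; ring
  have hdvd (j) : p ^ m ∣ signedMinors A j :=
    (IsIntegrallyClosed.pow_dvd_pow_iff two_ne_zero).1 (Dvd.intro _ (hsq j).symm)
  choose w hw using hdvd
  refine ⟨w, funext hw, fun j => mul_left_cancel₀ (pow_ne_zero 2 (pow_ne_zero m hp)) ?_⟩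
  rw [← hsq, hw, mul_pow]

theorem three_vector_extension_general {R : Type*} [CommRing R] [IsDomain R] [IsIntegrallyClosed R]
    {n : ℕ} (hn : Odd n) {p : R} {v : Fin n → Fin (n + 1) → R}
    (hnorm : ∀ i, v i ⬝ᵥ v i = p) (horth : Pairwise fun i j => v i ⬝ᵥ v j = 0) :
    ∃ w, (∀ i, v i ⬝ᵥ w = 0) ∧ w ⬝ᵥ w = p := by
  obtain rfl | hp := eq_or_ne p 0
  · exact ⟨0, fun i => dotProduct_zero (v i), zero_dotProduct 0⟩
  obtain ⟨m, rfl⟩ := hn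
  have hgram : of v * (of v)ᵀ = p • 1 := of_mul_transpose_eq_smul_one hnorm horth
  obtain ⟨w, hw, hsq⟩ := exists_signedMinors_eq_smul hp hgram
  refine ⟨w, fun i => ?_, ?_⟩
  · have h : p ^ m • (v i ⬝ᵥ w) = 0 := by
      rw [← dotProduct_smul, ← hw]
      exact congrFun (mulVec_signedMinors (of v)) i
    exact (smul_eq_zero.1 h).resolve_left (pow_ne_zero m hp)
  · calc w ⬝ᵥ w = ∑ j, (p - (of v).col j ⬝ᵥ (of v).col j) :=
          Finset.sum_congr rfl fun j _ => by rw [← hsq, sq]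
      _ = (2 * m + 1 + 1 : ℕ) * p - (2 * m + 1 : ℕ) * p := by
          simp only [Finset.sum_sub_distrib, sum_col_dotProduct_col hgram, Finset.sum_const,
            Finset.card_univ, Fintype.card_fin, nsmul_eq_mul]
      _ = p := by push_cast; ring

/-- A three-vector p-orthonormal system in ℤ⁴ admits a fourth orthogonal vector
of norm p, for every p ≥ 1. -/
theorem three_vector_extension
    (p : ℤ) (hp : 1 ≤ p) (v₁ v₂ v₃ : Fin 4 → ℤ)
    (hn1 : ∑ t, v₁ t * v₁ t = p) (hn2 : ∑ t, v₂ t * v₂ t = p)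
    (hn3 : ∑ t, v₃ t * v₃ t = p)
    (ho12 : ∑ t, v₁ t * v₂ t = 0) (ho13 : ∑ t, v₁ t * v₃ t = 0)
    (ho23 : ∑ t, v₂ t * v₃ t = 0) :
    ∃ v₄ : Fin 4 → ℤ, (∑ t, v₁ t * v₄ t = 0) ∧ (∑ t, v₂ t * v₄ t = 0) ∧
      (∑ t, v₃ t * v₄ t = 0) ∧ ∑ t, v₄ t * v₄ t = p := by
  have hnorm : ∀ i, ![v₁, v₂, v₃] i ⬝ᵥ ![v₁, v₂, v₃] i = p := by
    simp [Fin.forall_fin_succ, dotProduct, hn1, hn2, hn3]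
  have horth : Pairwise fun i j => ![v₁, v₂, v₃] i ⬝ᵥ ![v₁, v₂, v₃] j = 0 := by
    simp [Pairwise, Fin.forall_fin_succ, dotProduct, mul_comm, ho12, ho13, ho23]
  simpa [Fin.forall_fin_succ, dotProduct, and_assoc] using
    three_vector_extension_general (by decide) hnorm horth
end

section
/- Let p be a prime number and let S = {v₁, v₂} be a p-orthonormal system in ℤ⁴, v₁ = (x₁,x₂,x₃,x₄) and v₂ = (y₁,y₂,y₃,y₄), with |supp(S)| > 2. Then gcd(x₁,x₂,x₃,x₄) = gcd(y₁,y₂,y₃,y₄) = 1, and the greatest common divisor of the six 2×2 minors m_{ij} = xᵢyⱼ − xⱼyᵢ (1 ≤ i < j ≤ 4) of the 2×4 coordinate matrix equals 1. -/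
/-!
Contracting the minors `mᵢⱼ = vᵢwⱼ - vⱼwᵢ` with `w` gives `∑ⱼ mᵢⱼwⱼ = p vᵢ`. Since `p` is
squarefree, `v` is primitive, and a common divisor of the minors divides `p`, so it is a unit or
an associate of `p`. If `p` divided every minor, then `∑ⱼ mᵢⱼ² = p (vᵢ² + wᵢ²)` would force
`p ∣ vᵢ² + wᵢ²` for each `i`; as these nonnegative numbers add up to `2p`, at most two of them
could be nonzero.
-/

theorem gcd_eq_one_of_squarefree_sum_mul_self {ι R : Type*} [CommSemiring R]
    [NormalizedGCDMonoid R] {s : Finset ι} {v : ι → R}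
    (hv : Squarefree (∑ t ∈ s, v t * v t)) : s.gcd v = 1 := by
  rw [← Finset.normalize_gcd, normalize_eq_one]
  exact hv _ (Finset.dvd_sum fun i hi => mul_dvd_mul (Finset.gcd_dvd hi) (Finset.gcd_dvd hi))

open Finset in
theorem card_support_mul_le_sum_of_dvd {ι : Type*} {s : Finset ι} {f : ι → ℤ} {d : ℤ}
    (hf : ∀ i ∈ s, 0 ≤ f i) (hd : ∀ i ∈ s, d ∣ f i) :
    #{i ∈ s | f i ≠ 0} * d ≤ ∑ i ∈ s, f i := by
  rw [← sum_filter_ne_zero, ← nsmul_eq_mul]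
  refine card_nsmul_le_sum _ _ _ fun i hi => ?_
  obtain ⟨his, hne⟩ := mem_filter.mp hi
  exact Int.le_of_dvd ((hf i his).lt_of_ne' hne) (hd i his)

section Minors

open Finset Matrix

variable {ι R : Type*} [CommRing R]

/-- The 2×2 minor `mᵢⱼ` in columns `i`, `j` of the matrix with rows `v` and `w`. It is defined for
all ordered pairs, so that `coordMinor v w i` is a vector which can be paired with `v` and `w`. -/
def coordMinor (v w : ι → R) (i j : ι) : R := v i * w j - v j * w i

theorem coordMinor_self (v w : ι → R) (i : ι) : coordMinor v w i i = 0 := sub_self _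

theorem coordMinor_swap (v w : ι → R) (i j : ι) : coordMinor v w j i = -coordMinor v w i j :=
  (neg_sub _ _).symm

theorem coordMinor_eq_smul_sub_smul (v w : ι → R) (i : ι) :
    coordMinor v w i = v i • w - w i • v :=
  funext fun j => congrArg (v i * w j - ·) (mul_comm (v j) (w i))

variable [Fintype ι]

theorem coordMinor_dotProduct (v w u : ι → R) (i : ι) :
    coordMinor v w i ⬝ᵥ u = v i * (w ⬝ᵥ u) - w i * (v ⬝ᵥ u) := by
  simp only [coordMinor_eq_smul_sub_smul, sub_dotProduct, smul_dotProduct, smul_eq_mul]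

theorem coordMinor_dotProduct_self (v w : ι → R) (i : ι) :
    coordMinor v w i ⬝ᵥ coordMinor v w i =
      v i * v i * (w ⬝ᵥ w) - 2 * (v i * w i) * (v ⬝ᵥ w) + w i * w i * (v ⬝ᵥ v) := by
  rw [coordMinor_dotProduct, dotProduct_comm w, dotProduct_comm v, coordMinor_dotProduct,
    coordMinor_dotProduct, dotProduct_comm w v]
  ring

theorem gcd_coordMinor_dvd [NormalizedGCDMonoid R] [LinearOrder ι] (v w : ι → R) (i j : ι) :
    gcd {q : ι × ι | q.1 < q.2} (fun q => coordMinor v w q.1 q.2) ∣ coordMinor v w i j := by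
  have dvd_of_lt {k l : ι} (hkl : k < l) :
      gcd {q : ι × ι | q.1 < q.2} (fun q => coordMinor v w q.1 q.2) ∣ coordMinor v w k l :=
    gcd_dvd (f := fun q : ι × ι => coordMinor v w q.1 q.2)
      (mem_filter.mpr ⟨mem_univ (k, l), hkl⟩)
  rcases lt_trichotomy i j with hij | rfl | hji
  · exact dvd_of_lt hij
  · exact coordMinor_self v w i ▸ dvd_zero _
  · exact coordMinor_swap v w j i ▸ (dvd_of_lt hji).neg_right

theorem dvd_gcd_mul_dotProduct_self_of_dvd_coordMinor [NormalizedGCDMonoid R] {d : R}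
    {v w : ι → R} (ho : v ⬝ᵥ w = 0) (hd : ∀ i j, d ∣ coordMinor v w i j) :
    d ∣ univ.gcd v * (w ⬝ᵥ w) := by
  have hcontract (i : ι) : coordMinor v w i ⬝ᵥ w = v i * (w ⬝ᵥ w) := by
    rw [coordMinor_dotProduct, ho, mul_zero, sub_zero]
  have hdvd (i : ι) : d ∣ v i * (w ⬝ᵥ w) :=
    hcontract i ▸ dvd_sum fun j _ => (hd i j).mul_right (w j)
  exact (dvd_gcd fun i _ => hdvd i).trans (Finset.gcd_mul_right' univ v (w ⬝ᵥ w)).dvd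

theorem dvd_mul_self_add_mul_self_of_dvd_coordMinor [IsCancelMulZero R] {p : R} (hp : p ≠ 0)
    {v w : ι → R} (hv : v ⬝ᵥ v = p) (hw : w ⬝ᵥ w = p) (ho : v ⬝ᵥ w = 0) {i : ι}
    (hd : ∀ j, p ∣ coordMinor v w i j) : p ∣ v i * v i + w i * w i := by
  have hnorm : coordMinor v w i ⬝ᵥ coordMinor v w i = p * (v i * v i + w i * w i) := by
    rw [coordMinor_dotProduct_self, hv, hw, ho]
    ring
  have hdvd : p * p ∣ p * (v i * v i + w i * w i) :=
    hnorm ▸ dvd_sum fun j _ => mul_dvd_mul (hd j) (hd j)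
  exact (mul_dvd_mul_iff_left hp).mp hdvd

theorem card_support_le_two_of_dvd_coordMinor {p : ℤ} (hp : p ≠ 0) {v w : ι → ℤ}
    (hv : v ⬝ᵥ v = p) (hw : w ⬝ᵥ w = p) (ho : v ⬝ᵥ w = 0)
    (hd : ∀ i j, p ∣ coordMinor v w i j) : #{i | v i ≠ 0 ∨ w i ≠ 0} ≤ 2 := by
  have hnonneg : 0 ≤ v ⬝ᵥ v := sum_nonneg fun i _ => mul_self_nonneg (v i)
  have hpos : 0 < p := (hv ▸ hnonneg).lt_of_ne' hp
  have hsum : ∑ i, (v i * v i + w i * w i) = 2 * p := by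
    rw [sum_add_distrib, two_mul]
    exact congrArg₂ (· + ·) hv hw
  have hcard : #{i | v i * v i + w i * w i ≠ 0} * p ≤ 2 * p :=
    hsum ▸ card_support_mul_le_sum_of_dvd
      (fun i _ => add_nonneg (mul_self_nonneg (v i)) (mul_self_nonneg (w i)))
      fun i _ => dvd_mul_self_add_mul_self_of_dvd_coordMinor hp hv hw ho (hd i)
  simp only [ne_eq, mul_self_add_mul_self_eq_zero, not_and_or] at hcard
  exact_mod_cast le_of_mul_le_mul_right hcard hpos

theorem invariant_factors_one_general [LinearOrder ι] {p : ℤ} (hp : Prime p) {v w : ι → ℤ}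
    (hv : v ⬝ᵥ v = p) (hw : w ⬝ᵥ w = p) (ho : v ⬝ᵥ w = 0)
    (hsupp : 2 < #{i | v i ≠ 0 ∨ w i ≠ 0}) :
    univ.gcd v = 1 ∧ univ.gcd w = 1 ∧
      gcd {q : ι × ι | q.1 < q.2} (fun q => coordMinor v w q.1 q.2) = 1 := by
  have gcd_eq_one {u : ι → ℤ} (hu : u ⬝ᵥ u = p) : univ.gcd u = 1 :=
    gcd_eq_one_of_squarefree_sum_mul_self (show Squarefree (u ⬝ᵥ u) from hu ▸ hp.squarefree)
  refine ⟨gcd_eq_one hv, gcd_eq_one hw, ?_⟩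
  have hdvd := gcd_coordMinor_dvd v w
  have hdvd_p := dvd_gcd_mul_dotProduct_self_of_dvd_coordMinor ho hdvd
  rw [gcd_eq_one hv, one_mul, hw] at hdvd_p
  rcases hp.irreducible.dvd_iff.mp hdvd_p with hunit | hassoc
  · rwa [← Finset.normalize_gcd, normalize_eq_one]
  · have hp_dvd (i j : ι) : p ∣ coordMinor v w i j := hassoc.dvd.trans (hdvd i j)
    exact absurd (card_support_le_two_of_dvd_coordMinor hp.ne_zero hv hw ho hp_dvd) hsupp.not_ge

end Minors

/-- For a two-vector p-orthonormal system in ℤ⁴ (p prime) with support of size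
greater than 2, the coordinates of each vector are coprime and the six 2×2
minors of the coordinate matrix have gcd 1. -/
theorem invariant_factors_one
    (p : ℕ) (hp : p.Prime) (v₁ v₂ : Fin 4 → ℤ)
    (hn1 : ∑ t, v₁ t * v₁ t = (p : ℤ)) (hn2 : ∑ t, v₂ t * v₂ t = (p : ℤ))
    (ho : ∑ t, v₁ t * v₂ t = 0)
    (hsupp : 2 < (Finset.univ.filter (fun i : Fin 4 => v₁ i ≠ 0 ∨ v₂ i ≠ 0)).card) :
    Finset.gcd Finset.univ v₁ = 1 ∧ Finset.gcd Finset.univ v₂ = 1 ∧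
    Finset.gcd (Finset.univ.filter (fun q : Fin 4 × Fin 4 => q.1 < q.2))
      (fun q => v₁ q.1 * v₂ q.2 - v₁ q.2 * v₂ q.1) = 1 := by
  exact invariant_factors_one_general (Nat.prime_iff_prime_int.mp hp) hn1 hn2 ho hsupp
end

section
/- Let p be a prime number and let S = {v₁, v₂} be a p-orthonormal system in ℤ⁴ with |supp(S)| > 2. Then the ℤ-linear map ℤ⁴ → ℤ² given by x ↦ (⟨v₁|x⟩, ⟨v₂|x⟩) is surjective (equivalently, both invariant factors of the 2×4 integer matrix with rows v₁ and v₂ are equal to 1). -/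
/-!
By Lagrange's identity the squares of the `2 × 2` minors of the matrix with rows `v₁`, `v₂` sum to
its Gram determinant `p²`. If `p` divided every minor, a single minor would exhaust this sum and
all the others would vanish, confining both vectors to two coordinates. So some minor is coprime
to `p`. Multiplying a target vector by any determinant `det (A * B)` moves it into the range of
`A`; this applies to the Gram determinant and to that minor, and these two integers generate the
unit ideal.
-/

open scoped Matrix

section Matrix

variable {m n R : Type*} [Fintype m] [DecidableEq m] [Fintype n] [CommRing R]

theorem mulVec_mulVec_adjugate_mulVec (A : Matrix m n R) (B : Matrix n m R) (y : m → R) :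
    A *ᵥ (B *ᵥ ((A * B).adjugate *ᵥ y)) = (A * B).det • y := by
  rw [Matrix.mulVec_mulVec, Matrix.mulVec_mulVec, Matrix.mul_adjugate,
    Matrix.smul_mulVec, Matrix.one_mulVec]

theorem mulVec_surjective_of_isCoprime_det_mul {A : Matrix m n R} {B C : Matrix n m R}
    (h : IsCoprime (A * B).det (A * C).det) : Function.Surjective A.mulVec := by
  intro y
  obtain ⟨r, s, hrs⟩ := h
  refine ⟨r • (B *ᵥ ((A * B).adjugate *ᵥ y)) + s • (C *ᵥ ((A * C).adjugate *ᵥ y)), ?_⟩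
  rw [Matrix.mulVec_add, Matrix.mulVec_smul, Matrix.mulVec_smul, mulVec_mulVec_adjugate_mulVec,
    mulVec_mulVec_adjugate_mulVec, smul_smul, smul_smul, ← add_smul, hrs, one_smul]

end Matrix

/-- The Plücker coordinate of the pair `v, w` at `(i, j)`: the `2 × 2` minor on columns `i` and `j`
of the matrix with rows `v` and `w`. All ordered pairs `(i, j)` are allowed, so that each minor
occurs twice, with opposite signs. -/
def pluckerCoord {ι R : Type*} [CommRing R] (v w : ι → R) (i j : ι) : R :=
  v i * w j - v j * w i

/-- The Gram determinant of the pair `v, w` for the standard dot product. It is `p ^ 2` for a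
`p`-orthonormal pair. -/
def gramDet {ι R : Type*} [Fintype ι] [CommRing R] (v w : ι → R) : R :=
  (v ⬝ᵥ v) * (w ⬝ᵥ w) - (v ⬝ᵥ w) ^ 2

section Plucker

variable {ι R : Type*} [CommRing R] {v w : ι → R} {i j k : ι}

theorem pluckerCoord_self (v w : ι → R) (i : ι) : pluckerCoord v w i i = 0 :=
  sub_self _

theorem pluckerCoord_swap (v w : ι → R) (i j : ι) : pluckerCoord v w j i = -pluckerCoord v w i j :=
  (neg_sub _ _).symm

theorem eq_zero_of_pluckerCoord_eq_zero [NoZeroDivisors R] (hij : pluckerCoord v w i j ≠ 0)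
    (hik : pluckerCoord v w i k = 0) (hjk : pluckerCoord v w j k = 0) : v k = 0 ∧ w k = 0 := by
  have hv : v k * pluckerCoord v w i j =
      v j * pluckerCoord v w i k - v i * pluckerCoord v w j k := by
    simp only [pluckerCoord]; ring
  have hw : w k * pluckerCoord v w i j =
      w j * pluckerCoord v w i k - w i * pluckerCoord v w j k := by
    simp only [pluckerCoord]; ring
  simpa [hik, hjk, hij] using And.intro hv hw

variable [Fintype ι]

theorem gramDet_eq_sum_sum_mul_pluckerCoord (v w : ι → R) :
    gramDet v w = ∑ i, ∑ j, v i * w j * pluckerCoord v w i j := by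
  have expand (i j : ι) : v i * w j * pluckerCoord v w i j =
      (v i * v i) * (w j * w j) - (v i * w i) * (v j * w j) := by
    simp only [pluckerCoord]; ring
  simp only [expand, Finset.sum_sub_distrib, ← Finset.mul_sum, ← Finset.sum_mul, gramDet,
    dotProduct, sq]

theorem exists_pluckerCoord_ne_zero (h : gramDet v w ≠ 0) : ∃ i j, pluckerCoord v w i j ≠ 0 := by
  contrapose! h
  simp only [gramDet_eq_sum_sum_mul_pluckerCoord, h, mul_zero, Finset.sum_const_zero]

theorem sum_sum_pluckerCoord_sq (v w : ι → R) :
    ∑ i, ∑ j, pluckerCoord v w i j ^ 2 = 2 * gramDet v w := by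
  have expand (i j : ι) : pluckerCoord v w i j ^ 2 =
      (v i * v i) * (w j * w j) + (w i * w i) * (v j * v j) - 2 * ((v i * w i) * (v j * w j)) := by
    simp only [pluckerCoord]; ring
  simp only [expand, Finset.sum_sub_distrib, Finset.sum_add_distrib, ← Finset.mul_sum,
    ← Finset.sum_mul, gramDet, dotProduct]
  ring

theorem sum_pluckerCoord_sq_le_gramDet [LinearOrder R] [IsStrictOrderedRing R]
    (v w : ι → R) (i : ι) : ∑ j, pluckerCoord v w i j ^ 2 ≤ gramDet v w := by
  classical
  have column_eq_row :
      ∑ k ∈ Finset.univ.erase i, pluckerCoord v w k i ^ 2 = ∑ k, pluckerCoord v w i k ^ 2 := by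
    rw [← Finset.add_sum_erase _ _ (Finset.mem_univ i), pluckerCoord_self, zero_pow two_ne_zero,
      zero_add]
    exact Finset.sum_congr rfl fun k _ => by rw [pluckerCoord_swap, neg_sq]
  have column_le : ∑ k ∈ Finset.univ.erase i, pluckerCoord v w k i ^ 2 ≤
      ∑ k ∈ Finset.univ.erase i, ∑ l, pluckerCoord v w k l ^ 2 :=
    Finset.sum_le_sum fun k _ =>
      Finset.single_le_sum (fun l _ => sq_nonneg (pluckerCoord v w k l)) (Finset.mem_univ i)
  have lagrange := sum_sum_pluckerCoord_sq v w
  rw [← Finset.add_sum_erase _ _ (Finset.mem_univ i)] at lagrange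
  linarith

theorem pluckerCoord_eq_zero_of_gramDet_le_sq [LinearOrder R] [IsStrictOrderedRing R]
    (hij : gramDet v w ≤ pluckerCoord v w i j ^ 2) (hk : k ≠ j) :
    pluckerCoord v w i k = 0 := by
  classical
  have hpair : pluckerCoord v w i k ^ 2 + pluckerCoord v w i j ^ 2 ≤ gramDet v w := by
    rw [← Finset.sum_pair hk (f := fun l => pluckerCoord v w i l ^ 2)]
    exact (Finset.sum_le_univ_sum_of_nonneg fun l => sq_nonneg _).trans
      (sum_pluckerCoord_sq_le_gramDet v w i)
  exact sq_nonpos_iff _ |>.1 (by linarith)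

theorem surjective_dotProduct_pair_of_isCoprime
    (h : IsCoprime (gramDet v w) (pluckerCoord v w i j)) :
    Function.Surjective fun x : ι → R => (v ⬝ᵥ x, w ⬝ᵥ x) := by
  classical
  let A : Matrix (Fin 2) ι R := .of ![v, w]
  let E : Matrix (Fin 2) ι R := .of ![Pi.single i 1, Pi.single j 1]
  have det_mul_transpose (a b : ι → R) :
      (A * (Matrix.of ![a, b])ᵀ).det = (v ⬝ᵥ a) * (w ⬝ᵥ b) - (v ⬝ᵥ b) * (w ⬝ᵥ a) :=
    Matrix.det_fin_two _
  have hgram : (A * Aᵀ).det = gramDet v w := by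
    rw [det_mul_transpose, dotProduct_comm w v, ← sq, gramDet]
  have hminor : (A * Eᵀ).det = pluckerCoord v w i j := by
    simp only [E, det_mul_transpose, dotProduct_single_one, pluckerCoord]
  rw [← hgram, ← hminor] at h
  rintro ⟨y, z⟩
  obtain ⟨x, hx⟩ := mulVec_surjective_of_isCoprime_det_mul h ![y, z]
  exact ⟨x, Prod.ext (congrFun hx 0) (congrFun hx 1)⟩

end Plucker

section Int

variable {ι : Type*} [Fintype ι] {v w : ι → ℤ}

theorem card_support_le_two_of_dvd_pluckerCoord {p : ℤ} (hp : p ≠ 0) (hgram : gramDet v w = p ^ 2)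
    (hdvd : ∀ i j, p ∣ pluckerCoord v w i j) :
    (Finset.univ.filter fun i => v i ≠ 0 ∨ w i ≠ 0).card ≤ 2 := by
  classical
  obtain ⟨i, j, hij⟩ := exists_pluckerCoord_ne_zero (hgram ▸ pow_ne_zero 2 hp)
  have hle : gramDet v w ≤ pluckerCoord v w i j ^ 2 :=
    hgram ▸ Int.le_of_dvd (by positivity) (pow_dvd_pow_of_dvd (hdvd i j) 2)
  have hle' : gramDet v w ≤ pluckerCoord v w j i ^ 2 := by rwa [pluckerCoord_swap, neg_sq]
  have hsub : (Finset.univ.filter fun k => v k ≠ 0 ∨ w k ≠ 0) ⊆ {i, j} := by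
    intro k hk
    contrapose! hk
    obtain ⟨hki, hkj⟩ : k ≠ i ∧ k ≠ j := by simpa using hk
    simpa using eq_zero_of_pluckerCoord_eq_zero hij
      (pluckerCoord_eq_zero_of_gramDet_le_sq hle hkj)
      (pluckerCoord_eq_zero_of_gramDet_le_sq hle' hki)
  exact (Finset.card_le_card hsub).trans Finset.card_le_two

theorem dot_product_map_surjective_general {p : ℕ} (hp : p.Prime)
    (hgram : gramDet v w = (p : ℤ) ^ 2)
    (hsupp : 2 < (Finset.univ.filter fun i => v i ≠ 0 ∨ w i ≠ 0).card) :
    Function.Surjective fun x : ι → ℤ => (v ⬝ᵥ x, w ⬝ᵥ x) := by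
  obtain ⟨i, j, hij⟩ : ∃ i j, ¬ (p : ℤ) ∣ pluckerCoord v w i j := by
    by_contra! hdvd
    exact hsupp.not_ge <|
      card_support_le_two_of_dvd_pluckerCoord (mod_cast hp.ne_zero) hgram hdvd
  have hcoprime : IsCoprime (p : ℤ) (pluckerCoord v w i j) :=
    (Nat.prime_iff_prime_int.1 hp).coprime_iff_not_dvd.2 hij
  exact surjective_dotProduct_pair_of_isCoprime (hgram ▸ hcoprime.pow_left)

end Int

/-- For a two-vector p-orthonormal system in ℤ⁴ (p prime) with support of size
greater than 2, the map x ↦ (⟨v₁|x⟩, ⟨v₂|x⟩) from ℤ⁴ to ℤ² is surjective. -/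
theorem dot_product_map_surjective
    (p : ℕ) (hp : p.Prime) (v₁ v₂ : Fin 4 → ℤ)
    (hn1 : ∑ t, v₁ t * v₁ t = (p : ℤ)) (hn2 : ∑ t, v₂ t * v₂ t = (p : ℤ))
    (ho : ∑ t, v₁ t * v₂ t = 0)
    (hsupp : 2 < (Finset.univ.filter (fun i : Fin 4 => v₁ i ≠ 0 ∨ v₂ i ≠ 0)).card) :
    Function.Surjective
      (fun x : Fin 4 → ℤ => ((∑ t, v₁ t * x t, ∑ t, v₂ t * x t) : ℤ × ℤ)) :=
  dot_product_map_surjective_general hp (by simp [gramDet, dotProduct, hn1, hn2, ho, sq]) hsupp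
end

section
/- Let p ≥ 1 be an integer, let {v₁, v₂} be a p-orthonormal system in ℤ⁴, and let w₁, w₂ ∈ ℤ⁴ satisfy ⟨vᵢ|wⱼ⟩ = 0 for all i, j ∈ {1,2}. Let V be the 4×4 integer matrix with rows v₁, v₂, w₁, w₂. Then det(V)² = p² · (N(w₁)N(w₂) − ⟨w₁|w₂⟩²), i.e. the square of det(V) equals p² times the determinant of the Gram matrix of {w₁, w₂}. -/
/-! The rows of a square matrix `M` have Gram matrix `M * Mᵀ`, whose determinant is `det M ^ 2`.
If the rows split into two mutually orthogonal families, this Gram matrix is block diagonal, and an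
orthogonal family of `r` vectors of norm `p` has Gram matrix `p • 1`, contributing the factor
`p ^ r`. -/

open Matrix

section OrthogonalRows

variable {m n k R : Type*} [Fintype k]

theorem fromRows_mul_transpose_of_orthogonal [CommSemiring R]
    {V : Matrix m k R} {W : Matrix n k R} (hVW : V * Wᵀ = 0) :
    fromRows V W * (fromRows V W)ᵀ = fromBlocks (V * Vᵀ) 0 0 (W * Wᵀ) := by
  have hWV : W * Vᵀ = 0 := by
    rw [← transpose_eq_zero, transpose_mul, transpose_transpose, hVW]
  rw [transpose_fromRows, fromRows_mul_fromCols, hVW, hWV]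

variable [CommRing R] [Fintype m] [Fintype n]
  [DecidableEq m] [DecidableEq n] [DecidableEq k]

theorem det_fromRows_sq_of_orthogonal (e : k ≃ m ⊕ n) {V : Matrix m k R} {W : Matrix n k R}
    (hVW : V * Wᵀ = 0) :
    ((fromRows V W).submatrix e id).det ^ 2 = (V * Vᵀ).det * (W * Wᵀ).det := by
  set M := (fromRows V W).submatrix e id with hM
  calc M.det ^ 2 = (M * Mᵀ).det := by rw [det_mul, det_transpose, sq]
    _ = ((fromRows V W * (fromRows V W)ᵀ).submatrix e e).det := by
      rw [hM, transpose_submatrix, submatrix_mul _ _ e id e Function.bijective_id]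
    _ = (V * Vᵀ).det * (W * Wᵀ).det := by
      rw [det_submatrix_equiv_self, fromRows_mul_transpose_of_orthogonal hVW,
        det_fromBlocks_zero₂₁]

theorem det_sq_eq_p_sq_mul_gram_det_general (e : k ≃ m ⊕ n) {p : R}
    {V : Matrix m k R} {W : Matrix n k R} (hV : V * Vᵀ = p • 1) (hVW : V * Wᵀ = 0) :
    ((fromRows V W).submatrix e id).det ^ 2 = p ^ Fintype.card m * (W * Wᵀ).det := by
  rw [det_fromRows_sq_of_orthogonal e hVW, hV, det_smul, det_one, mul_one]

end OrthogonalRows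

section PairsOfRows

variable {k R : Type*}

theorem of_eq_submatrix_fromRows_pairs (a b c d : k → R) :
    of ![a, b, c, d] =
      (fromRows (of ![a, b]) (of ![c, d])).submatrix
        (finSumFinEquiv (m := 2) (n := 2)).symm id := by
  ext i j
  fin_cases i <;> rfl

theorem of_pair_mul_transpose_of_pair [Fintype k] [NonUnitalNonAssocSemiring R]
    (a b c d : k → R) :
    of ![a, b] * (of ![c, d])ᵀ = !![a ⬝ᵥ c, a ⬝ᵥ d; b ⬝ᵥ c, b ⬝ᵥ d] := by
  ext i j
  fin_cases i <;> fin_cases j <;> rfl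

end PairsOfRows

/-- If {v₁, v₂} is a p-orthonormal system in ℤ⁴ and w₁, w₂ are orthogonal to
both v₁ and v₂, then the square of the determinant of the 4×4 matrix with rows
v₁, v₂, w₁, w₂ equals p² times the Gram determinant of {w₁, w₂}. -/
theorem det_sq_eq_p_sq_mul_gram_det
    (p : ℤ) (hp : 1 ≤ p) (v₁ v₂ w₁ w₂ : Fin 4 → ℤ)
    (hn1 : ∑ t, v₁ t * v₁ t = p) (hn2 : ∑ t, v₂ t * v₂ t = p)
    (ho : ∑ t, v₁ t * v₂ t = 0)
    (h11 : ∑ t, v₁ t * w₁ t = 0) (h12 : ∑ t, v₁ t * w₂ t = 0)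
    (h21 : ∑ t, v₂ t * w₁ t = 0) (h22 : ∑ t, v₂ t * w₂ t = 0) :
    (Matrix.of ![v₁, v₂, w₁, w₂]).det ^ 2 =
      p ^ 2 * ((∑ t, w₁ t * w₁ t) * (∑ t, w₂ t * w₂ t) - (∑ t, w₁ t * w₂ t) ^ 2) := by
  rw [← dotProduct] at hn1 hn2 ho h11 h12 h21 h22
  have hV : of ![v₁, v₂] * (of ![v₁, v₂])ᵀ = p • 1 := by
    rw [of_pair_mul_transpose_of_pair, dotProduct_comm v₂ v₁, hn1, hn2, ho, one_fin_two]
    simp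
  have hVW : of ![v₁, v₂] * (of ![w₁, w₂])ᵀ = 0 := by
    rw [of_pair_mul_transpose_of_pair, h11, h12, h21, h22]
    exact (eta_fin_two 0).symm
  rw [← dotProduct, ← dotProduct, ← dotProduct, of_eq_submatrix_fromRows_pairs,
    det_sq_eq_p_sq_mul_gram_det_general _ hV hVW, Fintype.card_fin,
    of_pair_mul_transpose_of_pair, det_fin_two_of, dotProduct_comm w₂ w₁, ← sq]
end

section
/- Let p be a prime number, let S = {v₁, v₂} be a p-orthonormal system in ℤ⁴ with |supp(S)| > 2, and let {w₁, w₂} be a ℤ-basis of the orthogonal lattice Λ^⊥ = { v ∈ ℤ⁴ : ⟨v₁|v⟩ = ⟨v₂|v⟩ = 0 }. Then p divides every entry of the Gram matrix of {w₁, w₂}: p ∣ N(w₁), p ∣ N(w₂) and p ∣ ⟨w₁|w₂⟩. -/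
/-!
Modulo `p` the vectors `v₁`, `v₂` are isotropic and orthogonal to each other. Suppose they were
linearly dependent there, so that `p` divides all their `2 × 2` minors. Lagrange's identity for
the minors through a fixed coordinate `i` then gives `p ∣ v₁ᵢ² + v₂ᵢ²`, so each index of the support
contributes at least `p` to `N(v₁) + N(v₂) = 2p`, and the support has at most two elements.
Hence `v₁`, `v₂` span a plane in `𝔽ₚ⁴` which is contained in, and by dimension equal to, its own
orthogonal complement, and `Λ^⊥` reduces into this totally isotropic plane.
-/

open Matrix Module

section Isotropic

variable {K : Type*} [Field K]

theorem orthogonal_eq_self_of_le_orthogonal {V : Type*} [AddCommGroup V] [Module K V]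
    [FiniteDimensional K V] {B : LinearMap.BilinForm K V} (hB : B.Nondegenerate)
    {W : Submodule K V} (hW : W ≤ B.orthogonal W) (hdim : finrank K V ≤ 2 * finrank K W) :
    B.orthogonal W = W := by
  refine (Submodule.eq_of_le_of_finrank_le hW ?_).symm
  rw [LinearMap.BilinForm.finrank_orthogonal hB]
  lia

theorem dotProduct_eq_zero_of_linearIndependent_isotropic {ι κ : Type*} [Fintype ι] [Fintype κ]
    {e : κ → ι → K} (he : LinearIndependent K e) (hcard : Fintype.card ι ≤ 2 * Fintype.card κ)
    (hiso : ∀ a b, e a ⬝ᵥ e b = 0) {x y : ι → K} (hx : ∀ a, e a ⬝ᵥ x = 0)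
    (hy : ∀ a, e a ⬝ᵥ y = 0) : x ⬝ᵥ y = 0 := by
  set B : LinearMap.BilinForm K (ι → K) := dotProductBilin K K
  set W := Submodule.span K (Set.range e)
  have mem_orthogonal {z : ι → K} (hz : ∀ a, e a ⬝ᵥ z = 0) : z ∈ B.orthogonal W := by
    have span_le : W ≤ LinearMap.ker (B.flip z) := Submodule.span_le.mpr <| by
      rintro _ ⟨a, rfl⟩
      exact hz a
    exact fun w hw ↦ span_le hw
  have hB : B.Nondegenerate :=
    ⟨fun z hz ↦ dotProduct_eq_zero z hz,
      fun z hz ↦ dotProduct_eq_zero z fun w ↦ dotProduct_comm z w ▸ hz w⟩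
  have hW : W ≤ B.orthogonal W := Submodule.span_le.mpr <| by
    rintro _ ⟨b, rfl⟩
    exact mem_orthogonal fun a ↦ hiso a b
  have hdim : finrank K (ι → K) ≤ 2 * finrank K W := by
    rwa [finrank_fintype_fun_eq_card, finrank_span_eq_card he]
  have hxW : x ∈ W := orthogonal_eq_self_of_le_orthogonal hB hW hdim ▸ mem_orthogonal hx
  exact mem_orthogonal hy x hxW

end Isotropic

theorem intCast_dotProduct {R ι : Type*} [NonAssocRing R] [Fintype ι] (x y : ι → ℤ) :
    ((x ⬝ᵥ y : ℤ) : R) = (Int.cast ∘ x) ⬝ᵥ (Int.cast ∘ y) :=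
  RingHom.map_dotProduct (Int.castRingHom R) x y

theorem dvd_dotProduct_of_linearIndependent_zmod {ι κ : Type*} [Fintype ι] [Fintype κ] {p : ℕ}
    [Fact p.Prime] {v : κ → ι → ℤ}
    (hv : LinearIndependent (ZMod p) fun a ↦ (Int.cast ∘ v a : ι → ZMod p))
    (hcard : Fintype.card ι ≤ 2 * Fintype.card κ) (hiso : ∀ a b, (p : ℤ) ∣ v a ⬝ᵥ v b)
    {x y : ι → ℤ} (hx : ∀ a, (p : ℤ) ∣ v a ⬝ᵥ x) (hy : ∀ a, (p : ℤ) ∣ v a ⬝ᵥ y) :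
    (p : ℤ) ∣ x ⬝ᵥ y := by
  simp only [← ZMod.intCast_zmod_eq_zero_iff_dvd, intCast_dotProduct] at hiso hx hy ⊢
  exact dotProduct_eq_zero_of_linearIndependent_isotropic hv hcard hiso hx hy

theorem linearIndependent_of_det_comp_ne_zero {R ι κ : Type*} [CommRing R] [IsDomain R]
    [Fintype κ] [DecidableEq κ] {v : κ → ι → R} (f : κ → ι)
    (h : (of fun a b ↦ v a (f b)).det ≠ 0) : LinearIndependent R v :=
  .of_comp (LinearMap.funLeft R R f) (linearIndependent_rows_of_det_ne_zero h)

section Minors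

variable {ι : Type*} [Fintype ι]

theorem sum_minor_sq {R : Type*} [CommRing R] (v w : ι → R) (i : ι) :
    ∑ j, (v i * w j - v j * w i) ^ 2 =
      v i ^ 2 * (w ⬝ᵥ w) + w i ^ 2 * (v ⬝ᵥ v) - 2 * v i * w i * (v ⬝ᵥ w) := by
  simp only [dotProduct, Finset.mul_sum, ← Finset.sum_add_distrib, ← Finset.sum_sub_distrib]
  exact Finset.sum_congr rfl fun j _ ↦ by ring

theorem dvd_sq_add_sq_of_dvd_minor {R : Type*} [CommRing R] [IsDomain R] {p : R} (hp : p ≠ 0)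
    {v w : ι → R} (hv : v ⬝ᵥ v = p) (hw : w ⬝ᵥ w = p) (hvw : v ⬝ᵥ w = 0) {i : ι}
    (hminor : ∀ j, p ∣ v i * w j - v j * w i) : p ∣ v i ^ 2 + w i ^ 2 := by
  have sum_eq : ∑ j, (v i * w j - v j * w i) ^ 2 = p * (v i ^ 2 + w i ^ 2) := by
    rw [sum_minor_sq, hv, hw, hvw]
    ring
  have sq_dvd : p ^ 2 ∣ ∑ j, (v i * w j - v j * w i) ^ 2 :=
    Finset.dvd_sum fun j _ ↦ pow_dvd_pow_of_dvd (hminor j) 2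
  rwa [sum_eq, pow_two, mul_dvd_mul_iff_left hp] at sq_dvd

theorem card_support_mul_le_of_dvd_sq_add_sq {p : ℤ} {v w : ι → ℤ}
    (h : ∀ i, p ∣ v i ^ 2 + w i ^ 2) :
    (Finset.univ.filter fun i ↦ v i ≠ 0 ∨ w i ≠ 0).card * p ≤ v ⬝ᵥ v + w ⬝ᵥ w := by
  set s := Finset.univ.filter fun i ↦ v i ≠ 0 ∨ w i ≠ 0
  calc
    s.card * p = ∑ _i ∈ s, p := by rw [Finset.sum_const, nsmul_eq_mul]
    _ ≤ ∑ i ∈ s, (v i ^ 2 + w i ^ 2) := Finset.sum_le_sum fun i hi ↦ by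
      refine Int.le_of_dvd ?_ (h i)
      rcases (Finset.mem_filter.mp hi).2 with hi | hi <;> positivity
    _ ≤ ∑ i, (v i ^ 2 + w i ^ 2) :=
      Finset.sum_le_sum_of_subset_of_nonneg s.subset_univ fun i _ _ ↦ by positivity
    _ = v ⬝ᵥ v + w ⬝ᵥ w := by simp only [dotProduct, Finset.sum_add_distrib, pow_two]

theorem exists_not_dvd_minor {p : ℤ} (hp : 0 < p) {v w : ι → ℤ} (hv : v ⬝ᵥ v = p)
    (hw : w ⬝ᵥ w = p) (hvw : v ⬝ᵥ w = 0)
    (hsupp : 2 < (Finset.univ.filter fun i ↦ v i ≠ 0 ∨ w i ≠ 0).card) :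
    ∃ i j, ¬ p ∣ v i * w j - v j * w i := by
  by_contra! hminor
  have card_mul_le := card_support_mul_le_of_dvd_sq_add_sq fun i ↦
    dvd_sq_add_sq_of_dvd_minor hp.ne' hv hw hvw (hminor i)
  rw [hv, hw, ← two_mul] at card_mul_le
  have card_le := le_of_mul_le_mul_right card_mul_le hp
  exact hsupp.not_ge (mod_cast card_le)

theorem linearIndependent_zmod_of_two_lt_card_support {p : ℕ} [Fact p.Prime] {v w : ι → ℤ}
    (hv : v ⬝ᵥ v = p) (hw : w ⬝ᵥ w = p) (hvw : v ⬝ᵥ w = 0)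
    (hsupp : 2 < (Finset.univ.filter fun i ↦ v i ≠ 0 ∨ w i ≠ 0).card) :
    LinearIndependent (ZMod p) fun a ↦ (Int.cast ∘ ![v, w] a : ι → ZMod p) := by
  have hp : (0 : ℤ) < p := mod_cast (Fact.out : p.Prime).pos
  obtain ⟨i, j, hij⟩ := exists_not_dvd_minor hp hv hw hvw hsupp
  refine linearIndependent_of_det_comp_ne_zero ![i, j] ?_
  rw [← ZMod.intCast_zmod_eq_zero_iff_dvd] at hij
  simpa [det_fin_two] using hij

end Minors

theorem p_divides_gram_matrix_general {p : ℕ} (hp : p.Prime) {v₁ v₂ : Fin 4 → ℤ}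
    (hv₁ : v₁ ⬝ᵥ v₁ = p) (hv₂ : v₂ ⬝ᵥ v₂ = p) (hv : v₁ ⬝ᵥ v₂ = 0)
    (hsupp : 2 < (Finset.univ.filter fun i ↦ v₁ i ≠ 0 ∨ v₂ i ≠ 0).card) {x y : Fin 4 → ℤ}
    (hx : v₁ ⬝ᵥ x = 0 ∧ v₂ ⬝ᵥ x = 0) (hy : v₁ ⬝ᵥ y = 0 ∧ v₂ ⬝ᵥ y = 0) :
    (p : ℤ) ∣ x ⬝ᵥ y := by
  have : Fact p.Prime := ⟨hp⟩
  have hli := linearIndependent_zmod_of_two_lt_card_support hv₁ hv₂ hv hsupp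
  have hiso : ∀ a b, (p : ℤ) ∣ ![v₁, v₂] a ⬝ᵥ ![v₁, v₂] b := by
    simp [Fin.forall_fin_two, hv₁, hv₂, hv, dotProduct_comm v₂ v₁]
  have dvd_of_orthogonal {z : Fin 4 → ℤ} (hz : v₁ ⬝ᵥ z = 0 ∧ v₂ ⬝ᵥ z = 0) (a : Fin 2) :
      (p : ℤ) ∣ ![v₁, v₂] a ⬝ᵥ z := by
    fin_cases a <;> simp [hz.1, hz.2]
  exact dvd_dotProduct_of_linearIndependent_zmod hli (by simp) hiso
    (dvd_of_orthogonal hx) (dvd_of_orthogonal hy)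

/-- For a two-vector p-orthonormal system in ℤ⁴ (p prime) with support of size
greater than 2, p divides every entry of the Gram matrix of any ℤ-basis
{w₁, w₂} of the orthogonal lattice. -/
theorem p_divides_gram_matrix
    (p : ℕ) (hp : p.Prime) (v₁ v₂ : Fin 4 → ℤ)
    (hn1 : ∑ t, v₁ t * v₁ t = (p : ℤ)) (hn2 : ∑ t, v₂ t * v₂ t = (p : ℤ))
    (ho : ∑ t, v₁ t * v₂ t = 0)
    (hsupp : 2 < (Finset.univ.filter (fun i : Fin 4 => v₁ i ≠ 0 ∨ v₂ i ≠ 0)).card)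
    (w₁ w₂ : Fin 4 → ℤ)
    (hw₁ : (∑ t, v₁ t * w₁ t = 0) ∧ (∑ t, v₂ t * w₁ t = 0))
    (hw₂ : (∑ t, v₁ t * w₂ t = 0) ∧ (∑ t, v₂ t * w₂ t = 0))
    (hbasis : ∀ u : Fin 4 → ℤ,
      ((∑ t, v₁ t * u t = 0) ∧ (∑ t, v₂ t * u t = 0)) →
      ∃! ab : ℤ × ℤ, u = ab.1 • w₁ + ab.2 • w₂) :
    ((p : ℤ) ∣ ∑ t, w₁ t * w₁ t) ∧ ((p : ℤ) ∣ ∑ t, w₂ t * w₂ t) ∧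
      ((p : ℤ) ∣ ∑ t, w₁ t * w₂ t) :=
  have general {x y} := p_divides_gram_matrix_general (x := x) (y := y) hp hn1 hn2 ho hsupp
  ⟨general hw₁ hw₁, general hw₂ hw₂, general hw₁ hw₂⟩
end

section
/- Let n ≥ 1 and let v₁,…,v_k ∈ ℤⁿ (0 ≤ k < n) be linearly independent vectors that are pairwise orthogonal with respect to the standard dot product (⟨vᵢ|vⱼ⟩ = 0 for all i ≠ j). Then there exist vectors v_{k+1},…,v_n ∈ ℤⁿ such that v₁,…,v_n are linearly independent and pairwise orthogonal, i.e. every orthogonal system in ℤⁿ can be extended to an orthogonal base. -/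
/-!
Fewer than `rank M` linear functionals on `M` have a common nonzero zero, so an orthogonal system
that is smaller than the rank has a nonzero vector orthogonal to all its members. For an
anisotropic form over a domain, pairwise orthogonal nonzero vectors are linearly independent, so
adding such vectors one at a time ends in an orthogonal base. The dot product on `ℤⁿ` is
anisotropic because a sum of squares vanishes only when every term does.
-/

open LinearMap (BilinForm)

theorem exists_ne_zero_forall_apply_eq_zero_of_card_lt_rank {ι R M : Type*} [Fintype ι] [Ring R]
    [StrongRankCondition R] [AddCommGroup M] [Module R M] (f : ι → M →ₗ[R] R)
    (hcard : (Fintype.card ι : Cardinal) < Module.rank R M) :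
    ∃ x ≠ 0, ∀ i, f i x = 0 := by
  have hker : LinearMap.ker (LinearMap.pi f) ≠ ⊥ := fun hbot => by
    have hrank := LinearMap.lift_rank_le_of_injective _ (LinearMap.ker_eq_bot.mp hbot)
    rw [rank_fun', Cardinal.lift_natCast, Cardinal.lift_le_nat_iff] at hrank
    exact hcard.not_ge hrank
  obtain ⟨x, hx, hx0⟩ := Submodule.exists_mem_ne_zero_of_ne_bot hker
  exact ⟨x, hx0, congrFun hx⟩

theorem iIsOrtho_snoc {R M : Type*} [CommSemiring R] [AddCommMonoid M] [Module R M]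
    {B : BilinForm R M} (hrefl : B.IsRefl) {m : ℕ} {v : Fin m → M} (hv : B.iIsOrtho v) {x : M}
    (hx : ∀ i, B (v i) x = 0) : B.iIsOrtho (Fin.snoc v x : Fin (m + 1) → M) := by
  rw [BilinForm.iIsOrtho_def]
  intro i j hij
  induction i using Fin.lastCases with
  | last =>
    induction j using Fin.lastCases with
    | last => exact absurd rfl hij
    | cast j => simpa using hrefl _ _ (hx j)
  | cast i =>
    induction j using Fin.lastCases with
    | last => simpa using hx i
    | cast j => simpa using hv (ne_of_apply_ne Fin.castSucc hij)

theorem dotProductBilin_isRefl {ι R : Type*} [Fintype ι] [CommSemiring R] :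
    BilinForm.IsRefl (dotProductBilin R R : BilinForm R (ι → R)) :=
  fun x y hxy => (dotProduct_comm y x).trans hxy

theorem dotProductBilin_anisotropic {ι R : Type*} [Fintype ι] [CommRing R] [LinearOrder R]
    [IsStrictOrderedRing R] :
    (LinearMap.BilinMap.toQuadraticMap
      (dotProductBilin R R : BilinForm R (ι → R))).Anisotropic :=
  fun _ => dotProduct_self_eq_zero.mp

section BilinForm

variable {R M : Type*} [CommRing R] [AddCommGroup M] [Module R M] {B : BilinForm R M}

theorem linearIndependent_of_iIsOrtho_of_apply_self_ne_zero [NoZeroDivisors R] {ι : Type*}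
    {v : ι → M} (horth : B.iIsOrtho v) (hself : ∀ i, B (v i) (v i) ≠ 0) :
    LinearIndependent R v := by
  rw [linearIndependent_iff']
  intro s c hc i hi
  have hcross : ∀ j ∈ s, j ≠ i → c j * B (v j) (v i) = 0 := fun j _ hj => by
    rw [BilinForm.iIsOrtho_def.mp horth j i hj, mul_zero]
  have hpair : c i * B (v i) (v i) = 0 := calc
    c i * B (v i) (v i) = ∑ j ∈ s, c j * B (v j) (v i) :=
      (Finset.sum_eq_single_of_mem i hi hcross).symm
    _ = B (∑ j ∈ s, c j • v j) (v i) := by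
      simp only [map_sum, map_smul, LinearMap.sum_apply, LinearMap.smul_apply, smul_eq_mul]
    _ = 0 := by rw [hc, map_zero, LinearMap.zero_apply]
  exact (mul_eq_zero.mp hpair).resolve_right (hself i)

theorem exists_iIsOrtho_extension [StrongRankCondition R] (hrefl : B.IsRefl) {k m : ℕ}
    (hkm : k ≤ m) (hm : (m : Cardinal) ≤ Module.rank R M) {v : Fin k → M} (hne : ∀ i, v i ≠ 0)
    (horth : B.iIsOrtho v) :
    ∃ w : Fin m → M, (∀ i, w (Fin.castLE hkm i) = v i) ∧ (∀ i, w i ≠ 0) ∧ B.iIsOrtho w := by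
  induction m, hkm using Nat.le_induction with
  | base => exact ⟨v, fun _ => rfl, hne, horth⟩
  | succ m hkm ih =>
    have hlt : (m : Cardinal) < Module.rank R M :=
      (Nat.cast_lt.mpr m.lt_succ_self).trans_le hm
    obtain ⟨w, hwv, hw0, hw⟩ := ih hlt.le
    obtain ⟨x, hx0, hx⟩ := exists_ne_zero_forall_apply_eq_zero_of_card_lt_rank
      (fun i => B (w i)) (by rwa [Fintype.card_fin])
    refine ⟨Fin.snoc w x, fun i => ?_, Fin.lastCases ?_ fun i => ?_, iIsOrtho_snoc hrefl hw hx⟩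
    · rw [← hwv i]
      exact Fin.snoc_castSucc (α := fun _ => M) x w (Fin.castLE hkm i)
    · rwa [Fin.snoc_last]
    · rw [Fin.snoc_castSucc]
      exact hw0 i

theorem orthogonal_system_extends_to_base_general [IsDomain R] (hrefl : B.IsRefl)
    (haniso : B.toQuadraticMap.Anisotropic) {k n : ℕ} (hkn : k ≤ n)
    (hn : (n : Cardinal) ≤ Module.rank R M) {v : Fin k → M} (hne : ∀ i, v i ≠ 0)
    (horth : B.iIsOrtho v) :
    ∃ w : Fin n → M,
      (∀ i, w (Fin.castLE hkn i) = v i) ∧ LinearIndependent R w ∧ B.iIsOrtho w := by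
  obtain ⟨w, hwv, hw0, hw⟩ := exists_iIsOrtho_extension hrefl hkn hn hne horth
  have hself : ∀ i, B (w i) (w i) ≠ 0 := fun i => mt (haniso (w i)) (hw0 i)
  exact ⟨w, hwv, linearIndependent_of_iIsOrtho_of_apply_self_ne_zero hw hself, hw⟩

end BilinForm

/-- Every orthogonal system of k < n linearly independent pairwise orthogonal
vectors in ℤⁿ can be extended to an orthogonal base of n vectors. -/
theorem orthogonal_system_extends_to_base
    (n : ℕ) (hn : 1 ≤ n) (k : ℕ) (hk : k < n)
    (v : Fin k → (Fin n → ℤ))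
    (hli : LinearIndependent ℤ v)
    (horth : ∀ i j, i ≠ j → ∑ t, v i t * v j t = 0) :
    ∃ w : Fin n → (Fin n → ℤ),
      (∀ i : Fin k, w (Fin.castLE hk.le i) = v i) ∧
      LinearIndependent ℤ w ∧
      (∀ i j, i ≠ j → ∑ t, w i t * w j t = 0) := by
  exact orthogonal_system_extends_to_base_general (B := dotProductBilin ℤ ℤ)
    dotProductBilin_isRefl dotProductBilin_anisotropic hk.le (rank_fin_fun n).ge hli.ne_zero horth
end

section
/- Let n ≥ 1 and let p ≥ 1 be an integer which is not a perfect square. Suppose v₁,…,v_n ∈ ℤⁿ form a p-orthonormal base of ℤⁿ (N(vⱼ) = p for all j and ⟨v_h|vⱼ⟩ = 0 for h ≠ j). For 1 ≤ j ≤ n let w_j = (v_{j,1},…,v_{j,n},0) ∈ ℤ^{n+1}. Then {w₁,…,w_n} is a p-orthonormal system in ℤ^{n+1} which cannot be extended: there is no w ∈ ℤ^{n+1} with N(w) = p and ⟨w_j|w⟩ = 0 for all 1 ≤ j ≤ n. -/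
/-! The Gram relation `V Vᵀ = p I` makes `det V` a non-zero-divisor, so a vector orthogonal to every
padded row lies on the last axis; its norm is then the square of its last coordinate. -/

open Matrix
open scoped nonZeroDivisors

/-- The vectors `v j` form a `p`-orthonormal system: each has norm `v j ⬝ᵥ v j = p` and distinct
ones are orthogonal. A `p`-orthonormal base is the case where the system and the coordinates have
the same index type. -/
structure IsOrthonormalSystem {ι m R : Type*} [Fintype m] [Mul R] [AddCommMonoid R]
    (p : R) (v : ι → m → R) : Prop where
  norm_eq : ∀ j, v j ⬝ᵥ v j = p
  orthogonal : ∀ h j, h ≠ j → v h ⬝ᵥ v j = 0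

theorem dotProduct_eq_init_add_last {n : ℕ} {R : Type*} [Mul R] [AddCommMonoid R]
    (x y : Fin (n + 1) → R) :
    x ⬝ᵥ y = Fin.init x ⬝ᵥ Fin.init y + x (Fin.last n) * y (Fin.last n) :=
  Fin.sum_univ_castSucc _

theorem snoc_zero_dotProduct {n : ℕ} {R : Type*} [NonUnitalNonAssocSemiring R]
    (x : Fin n → R) (y : Fin (n + 1) → R) :
    (Fin.snoc x 0 : Fin (n + 1) → R) ⬝ᵥ y = x ⬝ᵥ Fin.init y := by
  rw [dotProduct_eq_init_add_last, Fin.init_snoc, Fin.snoc_last, zero_mul, add_zero]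

namespace IsOrthonormalSystem

theorem snoc_zero {ι R : Type*} {n : ℕ} [NonUnitalNonAssocSemiring R] {p : R}
    {v : ι → Fin n → R} (hv : IsOrthonormalSystem p v) :
    IsOrthonormalSystem p fun j ↦ (Fin.snoc (v j) 0 : Fin (n + 1) → R) where
  norm_eq j := by rw [snoc_zero_dotProduct, Fin.init_snoc, hv.norm_eq]
  orthogonal h j hne := by rw [snoc_zero_dotProduct, Fin.init_snoc, hv.orthogonal h j hne]

theorem mul_transpose_eq_smul_one {ι m R : Type*} [DecidableEq ι] [Fintype m]
    [NonAssocSemiring R] {p : R} {v : ι → m → R} (hv : IsOrthonormalSystem p v) :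
    of v * (of v)ᵀ = p • (1 : Matrix ι ι R) := by
  ext h j
  obtain rfl | hne := eq_or_ne h j
  · simpa [mul_apply, dotProduct] using hv.norm_eq h
  · simpa [mul_apply, dotProduct, one_apply_ne hne] using hv.orthogonal h j hne

section Base

variable {R : Type*} [CommRing R] {p : R}

theorem det_mem_nonZeroDivisors {ι : Type*} [Fintype ι] [DecidableEq ι] (hp : p ∈ R⁰)
    {v : ι → ι → R} (hv : IsOrthonormalSystem p v) : (of v).det ∈ R⁰ := by
  have det_mul_self : (of v).det * (of v).det = p ^ Fintype.card ι := by
    simpa only [det_mul, det_transpose, det_smul, det_one, mul_one] using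
      congrArg det hv.mul_transpose_eq_smul_one
  exact (mul_mem_nonZeroDivisors.mp (det_mul_self ▸ pow_mem hp _)).1

theorem eq_zero_of_forall_dotProduct_eq_zero {ι : Type*} [Fintype ι] (hp : p ∈ R⁰)
    {v : ι → ι → R} (hv : IsOrthonormalSystem p v) {x : ι → R} (hx : ∀ j, v j ⬝ᵥ x = 0) :
    x = 0 := by
  classical
  exact eq_zero_of_det_mem_nonZeroDivisors_of_mulVec_eq_zero (hv.det_mem_nonZeroDivisors hp)
    (funext hx)

theorem isSquare_dotProduct_self_of_orthogonal_snoc_zero {n : ℕ} (hp : p ∈ R⁰)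
    {v : Fin n → Fin n → R} (hv : IsOrthonormalSystem p v) {u : Fin (n + 1) → R}
    (hu : ∀ j, (Fin.snoc (v j) 0 : Fin (n + 1) → R) ⬝ᵥ u = 0) : IsSquare (u ⬝ᵥ u) := by
  have init_eq_zero : Fin.init u = 0 :=
    hv.eq_zero_of_forall_dotProduct_eq_zero hp fun j ↦ by rw [← snoc_zero_dotProduct, hu]
  exact ⟨u (Fin.last n), by
    rw [dotProduct_eq_init_add_last, init_eq_zero, zero_dotProduct, zero_add]⟩

end Base

end IsOrthonormalSystem

theorem padded_base_not_extendable_general {R : Type*} [CommRing R] {n : ℕ} {p : R}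
    (hp : p ∈ R⁰) (hnsq : ¬ IsSquare p) {v : Fin n → Fin n → R} (hv : IsOrthonormalSystem p v) :
    IsOrthonormalSystem p (fun j ↦ (Fin.snoc (v j) 0 : Fin (n + 1) → R)) ∧
      ¬ ∃ u : Fin (n + 1) → R,
        u ⬝ᵥ u = p ∧ ∀ j, (Fin.snoc (v j) 0 : Fin (n + 1) → R) ⬝ᵥ u = 0 :=
  ⟨hv.snoc_zero, fun ⟨_, hnorm, horth⟩ ↦
    hnsq (hnorm ▸ hv.isSquare_dotProduct_self_of_orthogonal_snoc_zero hp horth)⟩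

/-- If p ≥ 1 is not a perfect square and v₁,…,v_n is a p-orthonormal base of
ℤⁿ, then appending a zero coordinate to each vector yields a p-orthonormal
system in ℤ^{n+1} that cannot be extended by a vector of norm p orthogonal to
all of them. -/
theorem padded_base_not_extendable
    (n : ℕ) (hn : 1 ≤ n) (p : ℕ) (hp : 1 ≤ p) (hnsq : ¬ IsSquare p)
    (v : Fin n → (Fin n → ℤ))
    (hnorm : ∀ j, ∑ i, v j i * v j i = (p : ℤ))
    (horth : ∀ h j, h ≠ j → ∑ i, v h i * v j i = 0)
    (w : Fin n → (Fin (n + 1) → ℤ))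
    (hw : ∀ j, w j = Fin.snoc (v j) 0) :
    (∀ j, ∑ i, w j i * w j i = (p : ℤ)) ∧
    (∀ h j, h ≠ j → ∑ i, w h i * w j i = 0) ∧
    ¬ ∃ u : Fin (n + 1) → ℤ,
      (∑ i, u i * u i = (p : ℤ)) ∧ ∀ j, ∑ i, w j i * u i = 0 := by
  obtain rfl : w = fun j ↦ Fin.snoc (v j) 0 := funext hw
  obtain ⟨hsystem, hmaximal⟩ := padded_base_not_extendable_general
    (mem_nonZeroDivisors_of_ne_zero (by exact_mod_cast Nat.ne_of_gt hp))
    (mt Int.isSquare_natCast_iff.mp hnsq) ⟨hnorm, horth⟩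
  exact ⟨hsystem.norm_eq, hsystem.orthogonal, hmaximal⟩
end

section
/- Let n̄ and p̄ be odd positive integers, and set n = n̄² and p = n·p̄². Then the one-vector p-orthonormal system S = {v₁} in ℤⁿ with v₁ = (p̄, p̄, …, p̄) cannot be extended: there is no vector v₂ ∈ ℤⁿ with N(v₂) = p and ⟨v₁|v₂⟩ = 0. (Indeed, N(v₂) = p odd would force v₂ to have an odd number of odd coordinates, while ⟨v₁|v₂⟩ = 0 forces an even number of odd coordinates.) -/
section Parity

variable {ι : Type*} [Fintype ι] {w : ι → ℤ}

theorem even_sub_dotProduct_of_forall_odd (hw : ∀ i, Odd (w i)) (v : ι → ℤ) :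
    Even ((w - v) ⬝ᵥ v) := by
  refine Finset.even_sum _ fun i _ ↦ ?_
  rcases Int.even_or_odd (v i) with hv | hv
  · exact hv.mul_left _
  · exact ((hw i).sub_odd hv).mul_right _

theorem even_dotProduct_iff_even_dotProduct_self (hw : ∀ i, Odd (w i)) (v : ι → ℤ) :
    Even (w ⬝ᵥ v) ↔ Even (v ⬝ᵥ v) := by
  rw [← Int.even_sub, ← sub_dotProduct]
  exact even_sub_dotProduct_of_forall_odd hw v

theorem all_ones_system_not_extendable_general {p : ℤ} (hp : Odd p) (hw : ∀ i, Odd (w i)) :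
    ¬ ∃ v : ι → ℤ, v ⬝ᵥ v = p ∧ w ⬝ᵥ v = 0 := by
  rintro ⟨v, rfl, orthogonal⟩
  have even_norm : Even (v ⬝ᵥ v) :=
    (even_dotProduct_iff_even_dotProduct_self hw v).mp (orthogonal ▸ Even.zero)
  exact Int.not_even_iff_odd.mpr hp even_norm

end Parity

/-- If n̄ and p̄ are odd positive integers, n = n̄² and p = n·p̄², then the
one-vector p-orthonormal system {(p̄,…,p̄)} in ℤⁿ cannot be extended: there is
no v₂ ∈ ℤⁿ with N(v₂) = p orthogonal to (p̄,…,p̄). -/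
theorem all_ones_system_not_extendable
    (nb pb : ℕ) (hnb : Odd nb) (hnb0 : 0 < nb) (hpb : Odd pb) (hpb0 : 0 < pb) :
    ¬ ∃ v₂ : Fin (nb ^ 2) → ℤ,
      (∑ i, v₂ i * v₂ i = ((nb ^ 2 * pb ^ 2 : ℕ) : ℤ)) ∧
      (∑ i, (pb : ℤ) * v₂ i = 0) :=
  all_ones_system_not_extendable_general (hnb.pow.mul hpb.pow).natCast fun _ ↦ hpb.natCast
end
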